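/- arXiv:2603.21267 — 3 statements merged into one kernel-verified Lean document; each statement's English description precedes it below -/
import Mathlib

section
/- Let (C,p,Q,𝒬) be a generalized Brascamp–Lieb datum with 𝒬 symmetric positive semidefinite and BL(C,p,Q,𝒬) < +∞. If the tuples f = (f_i)_{i=1}^m and g = (g_i)_{i=1}^m are both extremizers for (C,p,Q,𝒬), then the tuple (Conv(f_i,g_i))_{i=1}^m, where Conv(u,v)(x) = 2^{k/2} ∫_{ℝ^k} u(√2·x − y) v(y) dy for u,v on ℝ^k, is also an extremizer for (C,p,Q,𝒬); in particular each Conv(f_i,g_i) is more log-convex than g_{Q_i}. -/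
open MeasureTheory Matrix
open scoped ENNReal

noncomputable section

/-- The centered Gaussian function attached to a matrix `Q` : `g_Q(x) = exp(-π⟨Qx,x⟩)`. -/
def gaussFn {k : ℕ} (Q : Matrix (Fin k) (Fin k) ℝ) (x : Fin k → ℝ) : ℝ :=
  Real.exp (-Real.pi * (Q.mulVec x ⬝ᵥ x))

/-- A nonnegative log-convex function. -/
def LogConvexFun {k : ℕ} (h : (Fin k → ℝ) → ℝ) : Prop :=
  (∀ x, 0 ≤ h x) ∧
    ∀ x y : Fin k → ℝ, ∀ a b : ℝ, 0 ≤ a → 0 ≤ b → a + b = 1 →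
      h (a • x + b • y) ≤ h x ^ a * h y ^ b

/-- `f` is more log-convex than `g_Q`, i.e. `f = g_Q · h` with `h` log-convex. -/
def MoreLogConvex {k : ℕ} (f : (Fin k → ℝ) → ℝ) (Q : Matrix (Fin k) (Fin k) ℝ) : Prop :=
  ∃ h : (Fin k → ℝ) → ℝ, LogConvexFun h ∧ f = fun x => gaussFn Q x * h x

/-- The generalized regularized Brascamp–Lieb constant of a datum `(C, p, Q, 𝒬)`. -/
def BLconstQ {n m : ℕ} {ni : Fin m → ℕ} (C : ∀ i, Matrix (Fin (ni i)) (Fin n) ℝ)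
    (p : Fin m → ℝ) (Q : ∀ i, Matrix (Fin (ni i)) (Fin (ni i)) ℝ)
    (𝒬 : Matrix (Fin n) (Fin n) ℝ) : ℝ≥0∞ :=
  ⨆ (B : ∀ i, Matrix (Fin (ni i)) (Fin (ni i)) ℝ)
    (_ : ∀ i, (B i).PosDef ∧ (Q i - B i).PosSemidef),
    ((∏ i, ENNReal.ofReal ((B i).det) ^ p i) /
        ENNReal.ofReal ((𝒬 + ∑ i, p i • ((C i)ᵀ * B i * C i)).det)) ^ ((2 : ℝ)⁻¹)

/-- An extremizer for the generalized regularized Brascamp–Lieb datum `(C, p, Q, 𝒬)`. -/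
def IsExtremizer {n m : ℕ} {ni : Fin m → ℕ} (C : ∀ i, Matrix (Fin (ni i)) (Fin n) ℝ)
    (p : Fin m → ℝ) (Q : ∀ i, Matrix (Fin (ni i)) (Fin (ni i)) ℝ)
    (𝒬 : Matrix (Fin n) (Fin n) ℝ) (f : ∀ i, (Fin (ni i) → ℝ) → ℝ) : Prop :=
  (∀ i, Integrable (f i)) ∧ (∀ i, ¬ (f i =ᵐ[volume] 0)) ∧
    (∀ i, MoreLogConvex (f i) (Q i)) ∧
    (∫⁻ x : Fin n → ℝ, ENNReal.ofReal
        (Real.exp (-Real.pi * (𝒬.mulVec x ⬝ᵥ x)) * ∏ i, f i ((C i).mulVec x) ^ p i)) =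
      BLconstQ C p Q 𝒬 * ∏ i, ENNReal.ofReal (∫ y, f i y) ^ p i

/-- The rescaled convolution `Conv(u,v)(x) = 2^{k/2} (u ∗ v)(√2 x)`. -/
def Conv {k : ℕ} (u v : (Fin k → ℝ) → ℝ) (x : Fin k → ℝ) : ℝ :=
  (2 : ℝ) ^ ((k : ℝ) / 2) * ∫ y, u (Real.sqrt 2 • x - y) * v y

open Filter Topology

variable {k : ℕ}

/-! ### Quadratic forms and Gaussian integrals -/

/-- The quadratic form `x ↦ ⟨Qx, x⟩`. -/
def quadForm {k : ℕ} (Q : Matrix (Fin k) (Fin k) ℝ) (x : Fin k → ℝ) : ℝ :=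
  Q.mulVec x ⬝ᵥ x

theorem gaussFn_eq (Q : Matrix (Fin k) (Fin k) ℝ) (x : Fin k → ℝ) :
    gaussFn Q x = Real.exp (-(Real.pi * quadForm Q x)) := by
  rw [gaussFn, quadForm, neg_mul]

theorem gaussFn_pos (Q : Matrix (Fin k) (Fin k) ℝ) (x : Fin k → ℝ) : 0 < gaussFn Q x :=
  Real.exp_pos _

theorem continuous_quadForm (Q : Matrix (Fin k) (Fin k) ℝ) : Continuous (quadForm Q) := by
  unfold quadForm
  exact (continuous_const.matrix_mulVec continuous_id).dotProduct continuous_id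

theorem continuous_gaussFn (Q : Matrix (Fin k) (Fin k) ℝ) : Continuous (gaussFn Q) := by
  unfold gaussFn
  exact Real.continuous_exp.comp (continuous_const.mul (continuous_quadForm Q))

theorem quadForm_zero (Q : Matrix (Fin k) (Fin k) ℝ) : quadForm Q 0 = 0 := by
  simp [quadForm]

theorem quadForm_smul (Q : Matrix (Fin k) (Fin k) ℝ) (c : ℝ) (x : Fin k → ℝ) :
    quadForm Q (c • x) = c ^ 2 * quadForm Q x := by
  simp only [quadForm, mulVec_smul, smul_dotProduct, dotProduct_smul, smul_eq_mul]
  ring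

theorem quadForm_add_add_quadForm_sub (Q : Matrix (Fin k) (Fin k) ℝ) (x z : Fin k → ℝ) :
    quadForm Q (x + z) + quadForm Q (x - z) = 2 * quadForm Q x + 2 * quadForm Q z := by
  simp only [quadForm, mulVec_add, mulVec_sub, add_dotProduct, sub_dotProduct, dotProduct_add,
    dotProduct_sub]
  ring

theorem inv_sqrt_two_sq : ((√2 : ℝ)⁻¹) ^ 2 = 1 / 2 := by
  rw [inv_pow, Real.sq_sqrt (by norm_num)]
  norm_num

theorem quadForm_rotation (Q : Matrix (Fin k) (Fin k) ℝ) (x z : Fin k → ℝ) :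
    quadForm Q ((√2 : ℝ)⁻¹ • (x + z)) + quadForm Q ((√2 : ℝ)⁻¹ • (x - z)) =
      quadForm Q x + quadForm Q z := by
  rw [quadForm_smul, quadForm_smul, ← mul_add, quadForm_add_add_quadForm_sub, inv_sqrt_two_sq]
  ring

theorem gaussFn_rotation (Q : Matrix (Fin k) (Fin k) ℝ) (x z : Fin k → ℝ) :
    gaussFn Q ((√2 : ℝ)⁻¹ • (x + z)) * gaussFn Q ((√2 : ℝ)⁻¹ • (x - z)) =
      gaussFn Q x * gaussFn Q z := by
  simp only [gaussFn_eq, ← Real.exp_add]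
  congr 1
  linear_combination (-Real.pi) * quadForm_rotation Q x z

theorem Matrix.PosSemidef.quadForm_nonneg {Q : Matrix (Fin k) (Fin k) ℝ} (hQ : Q.PosSemidef)
    (x : Fin k → ℝ) : 0 ≤ quadForm Q x := by
  have := hQ.dotProduct_mulVec_nonneg x
  rwa [star_trivial, dotProduct_comm] at this

theorem gaussFn_one_eq_prod (x : Fin k → ℝ) :
    gaussFn (1 : Matrix (Fin k) (Fin k) ℝ) x = ∏ i, Real.exp (-Real.pi * x i ^ 2) := by
  simp only [gaussFn, one_mulVec, dotProduct, ← Real.exp_sum, Finset.mul_sum, sq]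

theorem integrable_gaussFn_one :
    Integrable (gaussFn (1 : Matrix (Fin k) (Fin k) ℝ)) := by
  rw [show gaussFn (1 : Matrix (Fin k) (Fin k) ℝ) =
    fun x => ∏ i, Real.exp (-Real.pi * x i ^ 2) from funext gaussFn_one_eq_prod]
  exact Integrable.fintype_prod (f := fun (_ : Fin k) (v : ℝ) => Real.exp (-Real.pi * v ^ 2))
    fun _ => integrable_exp_neg_mul_sq Real.pi_pos

theorem integral_gaussFn_one :
    ∫ x, gaussFn (1 : Matrix (Fin k) (Fin k) ℝ) x = 1 := by
  simp_rw [gaussFn_one_eq_prod]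
  rw [integral_fintype_prod_volume_eq_prod
    (f := fun (_ : Fin k) (v : ℝ) => Real.exp (-Real.pi * v ^ 2))]
  simp_rw [integral_gaussian, div_self Real.pi_ne_zero]
  simp

theorem gaussFn_conjTranspose_mul_self (S : Matrix (Fin k) (Fin k) ℝ) (x : Fin k → ℝ) :
    gaussFn (star S * S) x = gaussFn 1 (toLin' S x) := by
  simp only [gaussFn, one_mulVec, toLin'_apply]
  rw [star_eq_conjTranspose, conjTranspose_eq_transpose_of_trivial, ← mulVec_mulVec,
    mulVec_transpose, ← dotProduct_mulVec]

open scoped MatrixOrder in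
theorem Matrix.PosDef.integrable_gaussFn_and_integral {A : Matrix (Fin k) (Fin k) ℝ}
    (hA : A.PosDef) :
    Integrable (gaussFn A) ∧ ∫ x, gaussFn A x = (A.det ^ (2 : ℝ)⁻¹)⁻¹ := by
  obtain ⟨S, rfl⟩ := CStarAlgebra.nonneg_iff_eq_star_mul_self.mp hA.posSemidef.nonneg
  have hdet : (star S * S).det = S.det ^ 2 := by
    rw [star_eq_conjTranspose, conjTranspose_eq_transpose_of_trivial, det_mul, det_transpose, sq]
  have hS : S.det ≠ 0 := by
    intro h
    have := hA.det_pos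
    rw [hdet, h] at this
    simp at this
  have hmap := Real.map_matrix_volume_pi_eq_smul_volume_pi hS
  have hmeas : AEMeasurable (toLin' S) (volume : Measure (Fin k → ℝ)) :=
    (LinearMap.continuous_on_pi _).measurable.aemeasurable
  have hcont : ∀ μ : Measure (Fin k → ℝ),
      AEStronglyMeasurable (gaussFn (1 : Matrix (Fin k) (Fin k) ℝ)) μ :=
    fun μ => (continuous_gaussFn 1).aestronglyMeasurable
  have hcomp : gaussFn (star S * S) = gaussFn 1 ∘ toLin' S :=
    funext (gaussFn_conjTranspose_mul_self S)
  constructor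
  · rw [hcomp, ← integrable_map_measure (hcont _) hmeas, hmap]
    exact integrable_gaussFn_one.smul_measure ENNReal.ofReal_ne_top
  · rw [hcomp]
    simp only [Function.comp_apply]
    rw [← integral_map hmeas (hcont _), hmap, integral_smul_measure, integral_gaussFn_one, hdet,
      ENNReal.toReal_ofReal (abs_nonneg _), ← one_div (2 : ℝ), ← Real.sqrt_eq_rpow, Real.sqrt_sq_eq_abs, abs_inv]
    simp

theorem Matrix.PosDef.integrable_gaussFn {A : Matrix (Fin k) (Fin k) ℝ} (hA : A.PosDef) :
    Integrable (gaussFn A) := hA.integrable_gaussFn_and_integral.1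

theorem Matrix.PosDef.integral_gaussFn {A : Matrix (Fin k) (Fin k) ℝ} (hA : A.PosDef) :
    ∫ x, gaussFn A x = (A.det ^ (2 : ℝ)⁻¹)⁻¹ := hA.integrable_gaussFn_and_integral.2

theorem Matrix.PosDef.integral_gaussFn_pos {A : Matrix (Fin k) (Fin k) ℝ} (hA : A.PosDef) :
    0 < ∫ x, gaussFn A x := by
  rw [hA.integral_gaussFn]
  exact inv_pos.2 (Real.rpow_pos_of_pos hA.det_pos _)

/-! ### Integrable functions that are more log-convex than a Gaussian -/

/-- Positive integrable functions that are more log-convex than `g_Q`. -/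
structure SemiconvexDensity (Q : Matrix (Fin k) (Fin k) ℝ) (f : (Fin k → ℝ) → ℝ) : Prop where
  pos : ∀ x, 0 < f x
  convexOn : ConvexOn ℝ Set.univ fun x => Real.log (f x) + Real.pi * quadForm Q x
  integrable : Integrable f

/-- The product `z ↦ u((y + z)/√2) v((y - z)/√2)`. -/
def rotPair (u v : (Fin k → ℝ) → ℝ) (y z : Fin k → ℝ) : ℝ :=
  u ((√2 : ℝ)⁻¹ • (y + z)) * v ((√2 : ℝ)⁻¹ • (y - z))

theorem convexOn_univ_of_log {φ : (Fin k → ℝ) → ℝ}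
    (h : ∀ x y, ∀ a b : ℝ, 0 ≤ a → 0 ≤ b → a + b = 1 →
      φ (a • x + b • y) ≤ a * φ x + b * φ y) : ConvexOn ℝ Set.univ φ :=
  ⟨convex_univ, fun x _ y _ a b ha hb hab => by simpa using h x y a b ha hb hab⟩

theorem ConvexOn.le_of_univ {φ : (Fin k → ℝ) → ℝ} (h : ConvexOn ℝ Set.univ φ)
    (x y : Fin k → ℝ) {a b : ℝ} (ha : 0 ≤ a) (hb : 0 ≤ b) (hab : a + b = 1) :
    φ (a • x + b • y) ≤ a * φ x + b * φ y := by
  simpa using h.2 (Set.mem_univ x) (Set.mem_univ y) ha hb hab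

theorem ConvexOn.le_half_add {φ : (Fin k → ℝ) → ℝ} (h : ConvexOn ℝ Set.univ φ)
    (x z : Fin k → ℝ) : 2 * φ x ≤ φ (x + z) + φ (x - z) := by
  have := h.le_of_univ (x + z) (x - z) (a := 1 / 2) (b := 1 / 2) (by norm_num) (by norm_num)
    (by norm_num)
  rw [show (1 / 2 : ℝ) • (x + z) + (1 / 2 : ℝ) • (x - z) = x by module] at this
  linarith

/-- Hölder's inequality: an integral of log-convex functions is log-convex. -/
theorem convexOn_log_integral {α : Type*} [MeasurableSpace α] {μ : Measure α}
    {R : (Fin k → ℝ) → α → ℝ} (hpos : ∀ y z, 0 < R y z)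
    (hconv : ∀ z, ConvexOn ℝ Set.univ fun y => Real.log (R y z))
    (hint : ∀ y, Integrable (R y) μ) (hintpos : ∀ y, 0 < ∫ z, R y z ∂μ) :
    ConvexOn ℝ Set.univ fun y => Real.log (∫ z, R y z ∂μ) := by
  refine convexOn_univ_of_log fun x y a b ha hb hab => ?_
  have hle : ∀ z, R (a • x + b • y) z ≤ R x z ^ a * R y z ^ b := by
    intro z
    rw [← Real.log_le_log_iff (hpos _ _)
      (mul_pos (Real.rpow_pos_of_pos (hpos _ _) _) (Real.rpow_pos_of_pos (hpos _ _) _)),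
      Real.log_mul (Real.rpow_pos_of_pos (hpos _ _) _).ne' (Real.rpow_pos_of_pos (hpos _ _) _).ne',
      Real.log_rpow (hpos _ _), Real.log_rpow (hpos _ _)]
    exact (hconv z).le_of_univ x y ha hb hab
  have key : ENNReal.ofReal (∫ z, R (a • x + b • y) z ∂μ) ≤
      ENNReal.ofReal ((∫ z, R x z ∂μ) ^ a * (∫ z, R y z ∂μ) ^ b) := by
    have hof : ∀ y, ENNReal.ofReal (∫ z, R y z ∂μ) = ∫⁻ z, ENNReal.ofReal (R y z) ∂μ := fun y =>
      ofReal_integral_eq_lintegral_ofReal (hint y) (Eventually.of_forall fun z => (hpos y z).le)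
    rw [ENNReal.ofReal_mul (Real.rpow_nonneg (hintpos _).le _),
      ← ENNReal.ofReal_rpow_of_nonneg (hintpos _).le ha,
      ← ENNReal.ofReal_rpow_of_nonneg (hintpos _).le hb, hof, hof, hof]
    refine le_trans (lintegral_mono fun z => ?_) (ENNReal.lintegral_mul_norm_pow_le
      (hint x).aestronglyMeasurable.aemeasurable.ennreal_ofReal
      (hint y).aestronglyMeasurable.aemeasurable.ennreal_ofReal ha hb hab)
    rw [ENNReal.ofReal_rpow_of_nonneg (hpos _ _).le ha,
      ENNReal.ofReal_rpow_of_nonneg (hpos _ _).le hb,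
      ← ENNReal.ofReal_mul (Real.rpow_nonneg (hpos _ _).le _)]
    exact ENNReal.ofReal_le_ofReal (hle z)
  rw [ENNReal.ofReal_le_ofReal_iff
    (mul_nonneg (Real.rpow_nonneg (hintpos _).le _) (Real.rpow_nonneg (hintpos _).le _))] at key
  have := Real.log_le_log (hintpos _) key
  rwa [Real.log_mul (Real.rpow_pos_of_pos (hintpos _) _).ne'
    (Real.rpow_pos_of_pos (hintpos _) _).ne', Real.log_rpow (hintpos _),
    Real.log_rpow (hintpos _)] at this

theorem sqrt_two_ne_zero : (√2 : ℝ) ≠ 0 := by positivity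

theorem lintegral_comp_sqrt_two_smul {F : (Fin k → ℝ) → ℝ≥0∞} (hF : Measurable F) :
    ∫⁻ x, F x = ENNReal.ofReal (√2 ^ k) * ∫⁻ x, F ((√2 : ℝ) • x) := by
  have hmap := Measure.map_addHaar_smul (volume : Measure (Fin k → ℝ)) sqrt_two_ne_zero
  have h : ∫⁻ x, F ((√2 : ℝ) • x) = ENNReal.ofReal |(√2 ^ k)⁻¹| * ∫⁻ x, F x := by
    rw [← lintegral_map hF (measurable_const_smul (√2 : ℝ)), hmap, lintegral_smul_measure]
    simp
  rw [h, ← mul_assoc, ← ENNReal.ofReal_mul (by positivity), abs_of_nonneg (by positivity),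
    mul_inv_cancel₀ (by positivity), ENNReal.ofReal_one, one_mul]

theorem rotation_sub_sqrt_two_smul (y w : Fin k → ℝ) :
    (√2 : ℝ)⁻¹ • (y + (y - (√2 : ℝ) • w)) = (√2 : ℝ) • y - w ∧
      (√2 : ℝ)⁻¹ • (y - (y - (√2 : ℝ) • w)) = w := by
  have h2 : (√2 : ℝ)⁻¹ * 2 = √2 := by
    rw [inv_mul_eq_div, Real.div_sqrt]
  constructor
  · rw [show y + (y - (√2 : ℝ) • w) = (2 : ℝ) • y - (√2 : ℝ) • w by module, smul_sub, smul_smul,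
      smul_smul, h2, inv_mul_cancel₀ sqrt_two_ne_zero, one_smul]
  · rw [sub_sub_cancel, smul_smul, inv_mul_cancel₀ sqrt_two_ne_zero, one_smul]

/-- The rotation `(x, z) ↦ ((x + z)/√2, (x - z)/√2)` preserves Lebesgue measure. -/
theorem lintegral_lintegral_rotation {H : (Fin k → ℝ) → (Fin k → ℝ) → ℝ≥0∞}
    (hH : Measurable (Function.uncurry H)) :
    ∫⁻ x, ∫⁻ z, H ((√2 : ℝ)⁻¹ • (x + z)) ((√2 : ℝ)⁻¹ • (x - z)) = ∫⁻ u, ∫⁻ v, H u v := by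
  have hH' : Measurable fun q : (Fin k → ℝ) × (Fin k → ℝ) => H ((√2 : ℝ) • q.1 - q.2) q.2 :=
    hH.comp (f := fun q : (Fin k → ℝ) × (Fin k → ℝ) => ((√2 : ℝ) • q.1 - q.2, q.2))
      (by fun_prop)
  have hinner : ∀ x, ∫⁻ z, H ((√2 : ℝ)⁻¹ • (x + z)) ((√2 : ℝ)⁻¹ • (x - z)) =
      ENNReal.ofReal (√2 ^ k) * ∫⁻ w, H ((√2 : ℝ) • x - w) w := by
    intro x
    rw [← lintegral_sub_left_eq_self _ x, lintegral_comp_sqrt_two_smul]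
    · simp_rw [(rotation_sub_sqrt_two_smul x _).1, (rotation_sub_sqrt_two_smul x _).2]
    · exact hH.comp (f := fun z : Fin k → ℝ =>
        ((√2 : ℝ)⁻¹ • (x + (x - z)), (√2 : ℝ)⁻¹ • (x - (x - z)))) (by fun_prop)
  simp_rw [hinner]
  rw [lintegral_const_mul _ (Measurable.lintegral_prod_right' hH'),
    lintegral_lintegral_swap hH'.aemeasurable,
    ← lintegral_const_mul _ (Measurable.lintegral_prod_left' hH'),
    lintegral_lintegral_swap hH.aemeasurable]
  refine lintegral_congr fun w => ?_
  rw [← lintegral_sub_right_eq_self (fun u => H u w) w,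
    lintegral_comp_sqrt_two_smul (F := fun u => H (u - w) w)]
  exact hH.comp (f := fun u : Fin k → ℝ => (u - w, w)) (by fun_prop)

theorem conv_eq_integral_rotPair (u v : (Fin k → ℝ) → ℝ) (y : Fin k → ℝ) :
    Conv u v y = ∫ z, rotPair u v y z := by
  have h2 : (2 : ℝ) ^ ((k : ℝ) / 2) = √2 ^ k := by
    rw [Real.sqrt_eq_rpow, ← Real.rpow_natCast, ← Real.rpow_mul (by norm_num)]
    congr 1
    ring
  have h := Measure.integral_comp_smul (volume : Measure (Fin k → ℝ))
    (fun z => rotPair u v y (y - z)) (√2)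
  rw [integral_sub_left_eq_self (fun z => rotPair u v y z) volume y] at h
  simp only [rotPair, (rotation_sub_sqrt_two_smul y _).1, (rotation_sub_sqrt_two_smul y _).2] at h
  rw [Conv, h, h2, smul_eq_mul, ← mul_assoc, abs_of_nonneg (by positivity)]
  simp [rotPair]

namespace SemiconvexDensity

variable {Q : Matrix (Fin k) (Fin k) ℝ} {f g : (Fin k → ℝ) → ℝ}

theorem of_moreLogConvex (h : MoreLogConvex f Q) (hi : Integrable f) (hne : ¬ f =ᵐ[volume] 0) :
    SemiconvexDensity Q f := by
  obtain ⟨h, ⟨hnn, hlc⟩, rfl⟩ := h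
  have hpos : ∀ x, 0 < h x := by
    by_contra! hx
    obtain ⟨x, hx⟩ := hx
    have hx0 : h x = 0 := le_antisymm hx (hnn x)
    refine hne (Eventually.of_forall fun z => ?_)
    have := hlc x ((2 : ℝ) • z - x) (1 / 2) (1 / 2) (by norm_num) (by norm_num) (by norm_num)
    rw [show (1 / 2 : ℝ) • x + (1 / 2 : ℝ) • ((2 : ℝ) • z - x) = z by module, hx0,
      Real.zero_rpow (by norm_num), zero_mul] at this
    simp [le_antisymm this (hnn z)]
  refine ⟨fun x => mul_pos (gaussFn_pos Q x) (hpos x), convexOn_univ_of_log ?_, hi⟩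
  intro x y a b ha hb hab
  have hlog : ∀ x, Real.log (gaussFn Q x * h x) + Real.pi * quadForm Q x = Real.log (h x) := by
    intro x
    rw [Real.log_mul (gaussFn_pos Q x).ne' (hpos x).ne', gaussFn_eq, Real.log_exp]
    ring
  simp only [hlog]
  rw [← Real.log_rpow (hpos x), ← Real.log_rpow (hpos y),
    ← Real.log_mul (Real.rpow_pos_of_pos (hpos x) _).ne' (Real.rpow_pos_of_pos (hpos y) _).ne']
  exact Real.log_le_log (hpos _) (hlc x y a b ha hb hab)

theorem moreLogConvex (hf : SemiconvexDensity Q f) : MoreLogConvex f Q := by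
  refine ⟨fun x => Real.exp (Real.log (f x) + Real.pi * quadForm Q x),
    ⟨fun x => (Real.exp_pos _).le, fun x y a b ha hb hab => ?_⟩, funext fun x => ?_⟩
  · rw [← Real.exp_mul, ← Real.exp_mul, ← Real.exp_add, Real.exp_le_exp]
    linarith [hf.convexOn.le_of_univ x y ha hb hab]
  · rw [gaussFn_eq, ← Real.exp_add, show -(Real.pi * quadForm Q x) +
      (Real.log (f x) + Real.pi * quadForm Q x) = Real.log (f x) by ring, Real.exp_log (hf.pos x)]

theorem continuous (hf : SemiconvexDensity Q f) : Continuous f := by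
  have h1 : Continuous fun x => Real.log (f x) + Real.pi * quadForm Q x :=
    hf.convexOn.locallyLipschitz.continuous
  have h2 : f = fun x => Real.exp ((Real.log (f x) + Real.pi * quadForm Q x) -
      Real.pi * quadForm Q x) := by
    funext x
    rw [add_sub_cancel_right, Real.exp_log (hf.pos x)]
  rw [h2]
  exact Real.continuous_exp.comp (h1.sub (continuous_const.mul (continuous_quadForm Q)))

theorem integral_pos (hf : SemiconvexDensity Q f) : 0 < ∫ x, f x := by
  rw [integral_pos_iff_support_of_nonneg (fun x => (hf.pos x).le) hf.integrable,
    Function.support_eq_univ fun x => (hf.pos x).ne']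
  exact Measure.measure_univ_pos.2 (NeZero.ne _)

theorem mul_gaussFn_le (hf : SemiconvexDensity Q f) (x z : Fin k → ℝ) :
    f x * gaussFn Q z ≤ (f (x + z) + f (x - z)) / 2 := by
  have h := hf.convexOn.le_half_add x z
  have hq := quadForm_add_add_quadForm_sub Q x z
  have h1 : Real.log (f x * gaussFn Q z) ≤ Real.log (√(f (x + z) * f (x - z))) := by
    rw [Real.log_mul (hf.pos x).ne' (gaussFn_pos Q z).ne', gaussFn_eq, Real.log_exp,
      Real.log_sqrt (mul_pos (hf.pos _) (hf.pos _)).le, Real.log_mul (hf.pos _).ne' (hf.pos _).ne']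
    have hq' := congrArg (fun t => Real.pi * t) hq
    simp only [mul_add] at hq'
    linarith
  have h2 := (Real.log_le_log_iff (mul_pos (hf.pos x) (gaussFn_pos Q z))
    (Real.sqrt_pos.2 (mul_pos (hf.pos _) (hf.pos _)))).1 h1
  refine h2.trans (Real.sqrt_le_iff.2 ⟨by linarith [hf.pos (x + z), hf.pos (x - z)], ?_⟩)
  nlinarith [sq_nonneg (f (x + z) - f (x - z))]

theorem mul_integral_gaussFn_le (hf : SemiconvexDensity Q f) (hQ : Q.PosDef) (x : Fin k → ℝ) :
    f x * ∫ z, gaussFn Q z ≤ ∫ z, f z := by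
  have h1 : Integrable fun z => f (x + z) := hf.integrable.comp_add_left x
  have h2 : Integrable fun z => f (x - z) := hf.integrable.comp_sub_left x
  calc f x * ∫ z, gaussFn Q z = ∫ z, f x * gaussFn Q z := (integral_const_mul _ _).symm
    _ ≤ ∫ z, (f (x + z) + f (x - z)) / 2 :=
      integral_mono (hQ.integrable_gaussFn.const_mul _) ((h1.add h2).div_const 2)
        fun z => hf.mul_gaussFn_le x z
    _ = ∫ z, f z := by
      rw [integral_div, integral_add h1 h2, integral_add_left_eq_self f x,
        integral_sub_left_eq_self f volume x]
      ring

theorem le_integral_div (hf : SemiconvexDensity Q f) (hQ : Q.PosDef) (x : Fin k → ℝ) :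
    f x ≤ (∫ z, gaussFn Q z)⁻¹ * ∫ z, f z := by
  rw [inv_mul_eq_div, le_div_iff₀ hQ.integral_gaussFn_pos]
  exact hf.mul_integral_gaussFn_le hQ x

theorem ofReal_integral (hf : SemiconvexDensity Q f) :
    ENNReal.ofReal (∫ z, f z) = ∫⁻ z, ENNReal.ofReal (f z) :=
  ofReal_integral_eq_lintegral_ofReal hf.integrable (Eventually.of_forall fun z => (hf.pos z).le)

theorem smul (hf : SemiconvexDensity Q f) {c : ℝ} (hc : 0 < c) :
    SemiconvexDensity Q fun x => c * f x := by
  refine ⟨fun x => mul_pos hc (hf.pos x), ?_, hf.integrable.const_mul c⟩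
  simp_rw [fun x => Real.log_mul hc.ne' (hf.pos x).ne', add_assoc]
  exact (convexOn_const _ convex_univ).add hf.convexOn

theorem rotPair_pos (hf : SemiconvexDensity Q f) (hg : SemiconvexDensity Q g)
    (y z : Fin k → ℝ) : 0 < rotPair f g y z := mul_pos (hf.pos _) (hg.pos _)

theorem log_rotPair (hf : SemiconvexDensity Q f) (hg : SemiconvexDensity Q g)
    (y z : Fin k → ℝ) :
    Real.log (rotPair f g y z) + Real.pi * quadForm Q y + Real.pi * quadForm Q z =
      (Real.log (f ((√2 : ℝ)⁻¹ • (y + z))) + Real.pi * quadForm Q ((√2 : ℝ)⁻¹ • (y + z))) +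
      (Real.log (g ((√2 : ℝ)⁻¹ • (y - z))) + Real.pi * quadForm Q ((√2 : ℝ)⁻¹ • (y - z))) := by
  rw [rotPair, Real.log_mul (hf.pos _).ne' (hg.pos _).ne']
  linear_combination (-Real.pi) * quadForm_rotation Q y z

theorem continuous_rotPair (hf : SemiconvexDensity Q f) (hg : SemiconvexDensity Q g) :
    Continuous (Function.uncurry (rotPair f g)) := by
  have := hf.continuous
  have := hg.continuous
  unfold rotPair Function.uncurry
  fun_prop

theorem convexOn_rotPair (hf : SemiconvexDensity Q f) (hg : SemiconvexDensity Q g) :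
    ConvexOn ℝ Set.univ fun q : (Fin k → ℝ) × (Fin k → ℝ) =>
      Real.log (rotPair f g q.1 q.2) + Real.pi * quadForm Q q.1 + Real.pi * quadForm Q q.2 := by
  simp_rw [hf.log_rotPair hg]
  refine ⟨convex_univ, fun q _ r _ a b ha hb hab => ?_⟩
  have h1 := hf.convexOn.le_of_univ ((√2 : ℝ)⁻¹ • (q.1 + q.2)) ((√2 : ℝ)⁻¹ • (r.1 + r.2)) ha hb hab
  have h2 := hg.convexOn.le_of_univ ((√2 : ℝ)⁻¹ • (q.1 - q.2)) ((√2 : ℝ)⁻¹ • (r.1 - r.2)) ha hb hab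
  rw [show a • (√2 : ℝ)⁻¹ • (q.1 + q.2) + b • (√2 : ℝ)⁻¹ • (r.1 + r.2) =
    (√2 : ℝ)⁻¹ • ((a • q + b • r).1 + (a • q + b • r).2) by simp; module] at h1
  rw [show a • (√2 : ℝ)⁻¹ • (q.1 - q.2) + b • (√2 : ℝ)⁻¹ • (r.1 - r.2) =
    (√2 : ℝ)⁻¹ • ((a • q + b • r).1 - (a • q + b • r).2) by simp; module] at h2
  simp only [smul_eq_mul] at h1 h2 ⊢
  linarith

theorem rotPair (hf : SemiconvexDensity Q f) (hg : SemiconvexDensity Q g) (hQ : Q.PosDef)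
    (y : Fin k → ℝ) : SemiconvexDensity Q (rotPair f g y) := by
  refine ⟨hf.rotPair_pos hg y, convexOn_univ_of_log fun z w a b ha hb hab => ?_, ?_⟩
  · have h := (hf.convexOn_rotPair hg).2 (Set.mem_univ (y, z)) (Set.mem_univ (y, w)) ha hb hab
    have hy : a • y + b • y = y := by rw [← add_smul, hab, one_smul]
    simp only [Prod.smul_mk, Prod.mk_add_mk, hy, smul_eq_mul] at h
    have hc : a * (Real.pi * quadForm Q y) + b * (Real.pi * quadForm Q y) =
      Real.pi * quadForm Q y := by rw [← add_mul, hab, one_mul]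
    linarith
  · have h1 : Integrable fun z => g ((√2 : ℝ)⁻¹ • (y - z)) :=
      (hg.integrable.comp_smul (inv_ne_zero sqrt_two_ne_zero)).comp_sub_left y
    refine Integrable.bdd_mul (c := (∫ z, gaussFn Q z)⁻¹ * ∫ z, f z) h1 ?_ ?_
    · have := hf.continuous
      exact Continuous.aestronglyMeasurable (by fun_prop)
    · refine Eventually.of_forall fun z => ?_
      rw [Real.norm_of_nonneg (hf.pos _).le]
      exact hf.le_integral_div hQ _

theorem lintegral_ofReal_conv (hf : SemiconvexDensity Q f) (hg : SemiconvexDensity Q g)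
    (hQ : Q.PosDef) :
    ∫⁻ y, ENNReal.ofReal (Conv f g y) = ENNReal.ofReal ((∫ y, f y) * ∫ y, g y) := by
  have h1 : ∀ y, ENNReal.ofReal (Conv f g y) =
      ∫⁻ z, ENNReal.ofReal (f ((√2 : ℝ)⁻¹ • (y + z))) *
        ENNReal.ofReal (g ((√2 : ℝ)⁻¹ • (y - z))) := by
    intro y
    rw [conv_eq_integral_rotPair, (hf.rotPair hg hQ y).ofReal_integral]
    exact lintegral_congr fun z => ENNReal.ofReal_mul (hf.pos _).le
  have hcf := hf.continuous.measurable
  have hcg := hg.continuous.measurable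
  simp_rw [h1]
  rw [lintegral_lintegral_rotation (H := fun u v => ENNReal.ofReal (f u) * ENNReal.ofReal (g v))
    (by unfold Function.uncurry; fun_prop), ENNReal.ofReal_mul hf.integral_pos.le,
    hf.ofReal_integral, hg.ofReal_integral]
  exact lintegral_lintegral_mul hcf.ennreal_ofReal.aemeasurable hcg.ennreal_ofReal.aemeasurable

theorem conv_pos (hf : SemiconvexDensity Q f) (hg : SemiconvexDensity Q g) (hQ : Q.PosDef)
    (y : Fin k → ℝ) : 0 < Conv f g y := by
  rw [conv_eq_integral_rotPair]
  exact (hf.rotPair hg hQ y).integral_pos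

theorem convexOn_conv (hf : SemiconvexDensity Q f) (hg : SemiconvexDensity Q g) (hQ : Q.PosDef) :
    ConvexOn ℝ Set.univ fun y => Real.log (Conv f g y) + Real.pi * quadForm Q y := by
  have hR : ∀ y, Real.log (Conv f g y) + Real.pi * quadForm Q y =
      Real.log (∫ z, Real.exp (Real.pi * quadForm Q y) * _root_.rotPair f g y z) := by
    intro y
    rw [integral_const_mul, ← conv_eq_integral_rotPair,
      Real.log_mul (Real.exp_pos _).ne' (hf.conv_pos hg hQ y).ne', Real.log_exp, add_comm]
  simp_rw [hR]
  refine convexOn_log_integral (fun y z => mul_pos (Real.exp_pos _) (hf.rotPair_pos hg y z))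
    (fun z => convexOn_univ_of_log fun x y a b ha hb hab => ?_)
    (fun y => (hf.rotPair hg hQ y).integrable.const_mul _) fun y => ?_
  · have h := (hf.convexOn_rotPair hg).2 (Set.mem_univ (x, z)) (Set.mem_univ (y, z)) ha hb hab
    have hz : a • z + b • z = z := by rw [← add_smul, hab, one_smul]
    simp only [Prod.smul_mk, Prod.mk_add_mk, hz, smul_eq_mul] at h
    have hc : a * (Real.pi * quadForm Q z) + b * (Real.pi * quadForm Q z) =
      Real.pi * quadForm Q z := by rw [← add_mul, hab, one_mul]
    simp_rw [fun y => Real.log_mul (Real.exp_pos (Real.pi * quadForm Q y)).ne'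
      (hf.rotPair_pos hg y z).ne', Real.log_exp]
    linarith
  · rw [integral_const_mul]
    exact mul_pos (Real.exp_pos _) (hf.rotPair hg hQ y).integral_pos

theorem conv (hf : SemiconvexDensity Q f) (hg : SemiconvexDensity Q g) (hQ : Q.PosDef) :
    SemiconvexDensity Q (Conv f g) := by
  have hc := hf.convexOn_conv hg hQ
  have hmeas : AEStronglyMeasurable (Conv f g) volume := by
    have h1 := (hf.continuous_rotPair hg).stronglyMeasurable.integral_prod_right
      (ν := (volume : Measure (Fin k → ℝ)))
    rw [show Conv f g = fun y => ∫ z, _root_.rotPair f g y z from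
      funext (conv_eq_integral_rotPair f g)]
    exact h1.aestronglyMeasurable
  refine ⟨hf.conv_pos hg hQ, hc, hmeas, ?_⟩
  rw [hasFiniteIntegral_iff_ofReal (Eventually.of_forall fun y => (hf.conv_pos hg hQ y).le),
    hf.lintegral_ofReal_conv hg hQ]
  exact ENNReal.ofReal_lt_top

theorem integral_conv (hf : SemiconvexDensity Q f) (hg : SemiconvexDensity Q g) (hQ : Q.PosDef) :
    ∫ y, Conv f g y = (∫ y, f y) * ∫ y, g y := by
  have h := hf.lintegral_ofReal_conv hg hQ
  rw [← (hf.conv hg hQ).ofReal_integral] at h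
  exact (ENNReal.ofReal_eq_ofReal_iff (hf.conv hg hQ).integral_pos.le
    (mul_pos hf.integral_pos hg.integral_pos).le).1 h

end SemiconvexDensity

theorem quadForm_sub_matrix (Q B : Matrix (Fin k) (Fin k) ℝ) (x : Fin k → ℝ) :
    quadForm (Q - B) x = quadForm Q x - quadForm B x := by
  simp only [quadForm, sub_mulVec, sub_dotProduct]

theorem Matrix.PosSemidef.convexOn_quadForm {A : Matrix (Fin k) (Fin k) ℝ} (hA : A.PosSemidef) :
    ConvexOn ℝ Set.univ (quadForm A) := by
  refine convexOn_univ_of_log fun x y a b ha hb hab => ?_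
  have h : a * quadForm A x + b * quadForm A y - quadForm A (a • x + b • y) =
      a * b * quadForm A (x - y) := by
    obtain rfl : b = 1 - a := by linarith
    simp only [quadForm, mulVec_add, mulVec_sub, mulVec_smul, add_dotProduct, sub_dotProduct,
      dotProduct_add, dotProduct_sub, smul_dotProduct, dotProduct_smul, smul_eq_mul]
    ring
  have := mul_nonneg (mul_nonneg ha hb) (hA.quadForm_nonneg (x - y))
  linarith

theorem semiconvexDensity_gaussFn {Q B : Matrix (Fin k) (Fin k) ℝ} (hB : (Q - B).PosSemidef)
    (hi : Integrable (gaussFn B)) : SemiconvexDensity Q (gaussFn B) := by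
  refine ⟨gaussFn_pos B, ?_, hi⟩
  have h : ∀ x, Real.log (gaussFn B x) + Real.pi * quadForm Q x =
      Real.pi * quadForm (Q - B) x := fun x => by
    rw [gaussFn_eq, Real.log_exp, quadForm_sub_matrix]
    ring
  simp_rw [h]
  exact hB.convexOn_quadForm.smul Real.pi_pos.le

/-! ### The Brascamp–Lieb functional -/

section Functional

variable {n m : ℕ} {ni : Fin m → ℕ} {C : ∀ i, Matrix (Fin (ni i)) (Fin n) ℝ} {p : Fin m → ℝ}
  {Q : ∀ i, Matrix (Fin (ni i)) (Fin (ni i)) ℝ} {𝒬 : Matrix (Fin n) (Fin n) ℝ}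
  {f g : ∀ i, (Fin (ni i) → ℝ) → ℝ}

/-- The integrand `e^{-π⟨𝒬x,x⟩} ∏ᵢ fᵢ(Cᵢx)^{pᵢ}`. -/
def blIntegrand (C : ∀ i, Matrix (Fin (ni i)) (Fin n) ℝ) (p : Fin m → ℝ)
    (𝒬 : Matrix (Fin n) (Fin n) ℝ) (f : ∀ i, (Fin (ni i) → ℝ) → ℝ) (x : Fin n → ℝ) : ℝ :=
  gaussFn 𝒬 x * ∏ i, f i ((C i).mulVec x) ^ p i

/-- The left-hand side of the Brascamp–Lieb inequality. -/
def blForm (C : ∀ i, Matrix (Fin (ni i)) (Fin n) ℝ) (p : Fin m → ℝ)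
    (𝒬 : Matrix (Fin n) (Fin n) ℝ) (f : ∀ i, (Fin (ni i) → ℝ) → ℝ) : ℝ≥0∞ :=
  ∫⁻ x, ENNReal.ofReal (blIntegrand C p 𝒬 f x)

/-- The product `∏ᵢ (∫ fᵢ)^{pᵢ}`. -/
def massProd (p : Fin m → ℝ) (f : ∀ i, (Fin (ni i) → ℝ) → ℝ) : ℝ :=
  ∏ i, (∫ y, f i y) ^ p i

/-- Tuples of inputs of the regularized Brascamp–Lieb inequality. -/
def Admissible (Q : ∀ i, Matrix (Fin (ni i)) (Fin (ni i)) ℝ)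
    (f : ∀ i, (Fin (ni i) → ℝ) → ℝ) : Prop :=
  ∀ i, SemiconvexDensity (Q i) (f i)

/-- The best constant of the regularized Brascamp–Lieb inequality over all admissible tuples. -/
def blSup (C : ∀ i, Matrix (Fin (ni i)) (Fin n) ℝ) (p : Fin m → ℝ)
    (Q : ∀ i, Matrix (Fin (ni i)) (Fin (ni i)) ℝ) (𝒬 : Matrix (Fin n) (Fin n) ℝ) : ℝ≥0∞ :=
  ⨆ (f : ∀ i, (Fin (ni i) → ℝ) → ℝ) (_ : Admissible Q f),
    blForm C p 𝒬 f / ENNReal.ofReal (massProd p f)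

/-- The tuple `z ↦ fᵢ((Cᵢx + z)/√2) gᵢ((Cᵢx - z)/√2)`. -/
def rotTuple (C : ∀ i, Matrix (Fin (ni i)) (Fin n) ℝ) (f g : ∀ i, (Fin (ni i) → ℝ) → ℝ)
    (x : Fin n → ℝ) (i : Fin m) : (Fin (ni i) → ℝ) → ℝ :=
  rotPair (f i) (g i) ((C i).mulVec x)

theorem blIntegrand_nonneg (hf : ∀ i y, 0 ≤ f i y) (x : Fin n → ℝ) :
    0 ≤ blIntegrand C p 𝒬 f x :=
  mul_nonneg (gaussFn_pos _ _).le (Finset.prod_nonneg fun i _ => Real.rpow_nonneg (hf i _) _)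

theorem continuous_blIntegrand (hp : ∀ i, 0 < p i) (hf : ∀ i, Continuous (f i)) :
    Continuous (blIntegrand C p 𝒬 f) := by
  refine (continuous_gaussFn 𝒬).mul (continuous_finsetProd _ fun i _ => ?_)
  exact ((hf i).comp (continuous_const.matrix_mulVec continuous_id)).rpow_const
    fun x => Or.inr (hp i).le

theorem measurable_ofReal_blIntegrand (hp : ∀ i, 0 < p i) (hf : ∀ i, Continuous (f i)) :
    Measurable fun x => ENNReal.ofReal (blIntegrand C p 𝒬 f x) :=
  (continuous_blIntegrand hp hf).measurable.ennreal_ofReal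

theorem blIntegrand_mono (hp : ∀ i, 0 < p i) (hf : ∀ i y, 0 ≤ f i y)
    (hfg : ∀ i y, f i y ≤ g i y) (x : Fin n → ℝ) :
    blIntegrand C p 𝒬 f x ≤ blIntegrand C p 𝒬 g x :=
  mul_le_mul_of_nonneg_left (Finset.prod_le_prod (fun i _ => Real.rpow_nonneg (hf i _) _)
    fun i _ => Real.rpow_le_rpow (hf i _) (hfg i _) (hp i).le) (gaussFn_pos _ _).le

theorem blForm_mono (hp : ∀ i, 0 < p i) (hf : ∀ i y, 0 ≤ f i y)
    (hfg : ∀ i y, f i y ≤ g i y) : blForm C p 𝒬 f ≤ blForm C p 𝒬 g :=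
  lintegral_mono fun x => ENNReal.ofReal_le_ofReal (blIntegrand_mono hp hf hfg x)

theorem blForm_smul {a : Fin m → ℝ} (ha : ∀ i, 0 ≤ a i) (hf : ∀ i y, 0 ≤ f i y) :
    blForm C p 𝒬 (fun i y => a i * f i y) =
      ENNReal.ofReal (∏ i, a i ^ p i) * blForm C p 𝒬 f := by
  rw [blForm, blForm, ← lintegral_const_mul' _ _ ENNReal.ofReal_ne_top]
  refine lintegral_congr fun x => ?_
  rw [← ENNReal.ofReal_mul (Finset.prod_nonneg fun i _ => Real.rpow_nonneg (ha i) _)]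
  congr 1
  simp_rw [blIntegrand, fun i => Real.mul_rpow (z := p i) (ha i) (hf i ((C i).mulVec x)),
    Finset.prod_mul_distrib]
  ring

theorem blForm_const_lt_top (h𝒬 : 𝒬.PosDef) (b : Fin m → ℝ) :
    blForm C p 𝒬 (fun i _ => b i) < ⊤ :=
  (h𝒬.integrable_gaussFn.mul_const (∏ i, b i ^ p i)).lintegral_lt_top

/-- Dominated convergence for the Brascamp–Lieb functional. -/
theorem tendsto_blForm {ι : Type*} {l : Filter ι} [l.IsCountablyGenerated] (hp : ∀ i, 0 < p i)
    (h𝒬 : 𝒬.PosDef) {u : ι → ∀ i, (Fin (ni i) → ℝ) → ℝ} {b : Fin m → ℝ}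
    (hcont : ∀ t i, Continuous (u t i)) (hnn : ∀ t i y, 0 ≤ u t i y)
    (hb : ∀ t i y, u t i y ≤ b i)
    (hlim : ∀ i y, Tendsto (fun t => u t i y) l (𝓝 (f i y))) :
    Tendsto (fun t => blForm C p 𝒬 (u t)) l (𝓝 (blForm C p 𝒬 f)) := by
  refine tendsto_lintegral_filter_of_dominated_convergence
    (fun x => ENNReal.ofReal (blIntegrand C p 𝒬 (fun i _ => b i) x))
    (Eventually.of_forall fun t => measurable_ofReal_blIntegrand hp (hcont t))
    (Eventually.of_forall fun t => Eventually.of_forall fun x =>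
      ENNReal.ofReal_le_ofReal (blIntegrand_mono hp (hnn t) (hb t) x))
    (blForm_const_lt_top h𝒬 b).ne (Eventually.of_forall fun x => ?_)
  refine (ENNReal.continuous_ofReal.tendsto _).comp (Tendsto.mul tendsto_const_nhds ?_)
  exact tendsto_finsetProd _ fun i _ => (hlim i _).rpow_const (Or.inr (hp i).le)

namespace Admissible

theorem nonneg (hf : Admissible Q f) (i : Fin m) (y : Fin (ni i) → ℝ) : 0 ≤ f i y :=
  ((hf i).pos y).le

theorem massProd_pos (hf : Admissible Q f) (p : Fin m → ℝ) : 0 < massProd p f :=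
  Finset.prod_pos fun i _ => Real.rpow_pos_of_pos (hf i).integral_pos _

theorem blForm_pos (hf : Admissible Q f) (hp : ∀ i, 0 < p i) : 0 < blForm C p 𝒬 f := by
  have hpos : ∀ x, 0 < blIntegrand C p 𝒬 f x := fun x =>
    mul_pos (gaussFn_pos _ _) (Finset.prod_pos fun i _ => Real.rpow_pos_of_pos ((hf i).pos _) _)
  rw [blForm, lintegral_pos_iff_support
    (measurable_ofReal_blIntegrand hp fun i => (hf i).continuous),
    Function.support_eq_univ fun x => (ENNReal.ofReal_pos.2 (hpos x)).ne']
  exact Measure.measure_univ_pos.2 (NeZero.ne _)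

theorem rotTuple (hf : Admissible Q f) (hg : Admissible Q g) (hQ : ∀ i, (Q i).PosDef)
    (x : Fin n → ℝ) : Admissible Q (rotTuple C f g x) :=
  fun i => (hf i).rotPair (hg i) (hQ i) _

theorem conv (hf : Admissible Q f) (hg : Admissible Q g) (hQ : ∀ i, (Q i).PosDef) :
    Admissible Q fun i => Conv (f i) (g i) :=
  fun i => (hf i).conv (hg i) (hQ i)

theorem massProd_conv (hf : Admissible Q f) (hg : Admissible Q g) (hQ : ∀ i, (Q i).PosDef) :
    massProd p (fun i => Conv (f i) (g i)) = massProd p f * massProd p g := by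
  simp_rw [massProd, ← Finset.prod_mul_distrib]
  refine Finset.prod_congr rfl fun i _ => ?_
  rw [(hf i).integral_conv (hg i) (hQ i),
    Real.mul_rpow (hf i).integral_pos.le (hg i).integral_pos.le]

theorem blForm_mul_blForm (hf : Admissible Q f) (hg : Admissible Q g) (hp : ∀ i, 0 < p i) :
    blForm C p 𝒬 f * blForm C p 𝒬 g =
      ∫⁻ x, ENNReal.ofReal (gaussFn 𝒬 x) * blForm C p 𝒬 (_root_.rotTuple C f g x) := by
  have hmf := measurable_ofReal_blIntegrand (C := C) (𝒬 := 𝒬) hp fun i => (hf i).continuous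
  have hmg := measurable_ofReal_blIntegrand (C := C) (𝒬 := 𝒬) hp fun i => (hg i).continuous
  rw [blForm, blForm, ← lintegral_lintegral_mul hmf.aemeasurable hmg.aemeasurable,
    ← lintegral_lintegral_rotation ((hmf.comp measurable_fst).mul (hmg.comp measurable_snd))]
  refine lintegral_congr fun x => ?_
  rw [blForm, ← lintegral_const_mul' _ _ ENNReal.ofReal_ne_top]
  refine lintegral_congr fun z => ?_
  rw [← ENNReal.ofReal_mul (blIntegrand_nonneg hf.nonneg _),
    ← ENNReal.ofReal_mul (gaussFn_pos _ _).le]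
  congr 1
  have hprod : ∀ i, _root_.rotTuple C f g x i ((C i).mulVec z) ^ p i =
      f i ((C i).mulVec ((√2 : ℝ)⁻¹ • (x + z))) ^ p i *
        g i ((C i).mulVec ((√2 : ℝ)⁻¹ • (x - z))) ^ p i := by
    intro i
    rw [_root_.rotTuple, rotPair, ← mulVec_add, ← mulVec_sub, ← mulVec_smul, ← mulVec_smul,
      Real.mul_rpow (hf.nonneg i _) (hg.nonneg i _)]
  simp_rw [blIntegrand, hprod, Finset.prod_mul_distrib]
  linear_combination (∏ i, f i ((C i).mulVec ((√2 : ℝ)⁻¹ • (x + z))) ^ p i) *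
    (∏ i, g i ((C i).mulVec ((√2 : ℝ)⁻¹ • (x - z))) ^ p i) * gaussFn_rotation 𝒬 x z

theorem blIntegrand_conv (x : Fin n → ℝ) :
    blIntegrand C p 𝒬 (fun i => Conv (f i) (g i)) x =
      gaussFn 𝒬 x * massProd p (_root_.rotTuple C f g x) := by
  simp only [blIntegrand, massProd, _root_.rotTuple, conv_eq_integral_rotPair]

theorem lintegral_const_mul_massProd (hf : Admissible Q f) (hg : Admissible Q g)
    (hQ : ∀ i, (Q i).PosDef) (hp : ∀ i, 0 < p i) (κ : ℝ≥0∞) :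
    ∫⁻ x, ENNReal.ofReal (gaussFn 𝒬 x) *
        (κ * ENNReal.ofReal (massProd p (_root_.rotTuple C f g x))) =
      κ * blForm C p 𝒬 (fun i => Conv (f i) (g i)) := by
  rw [blForm, ← lintegral_const_mul _
    (measurable_ofReal_blIntegrand hp fun i => (hf.conv hg hQ i).continuous)]
  refine lintegral_congr fun x => ?_
  rw [blIntegrand_conv, ENNReal.ofReal_mul (gaussFn_pos _ _).le]
  ring

theorem blForm_mul_blForm_le (hf : Admissible Q f) (hg : Admissible Q g)
    (hQ : ∀ i, (Q i).PosDef) (hp : ∀ i, 0 < p i) {κ : ℝ≥0∞}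
    (hκ : ∀ u, Admissible Q u → blForm C p 𝒬 u ≤ κ * ENNReal.ofReal (massProd p u)) :
    blForm C p 𝒬 f * blForm C p 𝒬 g ≤ κ * blForm C p 𝒬 (fun i => Conv (f i) (g i)) := by
  rw [hf.blForm_mul_blForm hg hp, ← hf.lintegral_const_mul_massProd hg hQ hp κ]
  exact lintegral_mono fun x => mul_le_mul_right (hκ _ (hf.rotTuple hg hQ x)) _

theorem blForm_le (hf : Admissible Q f) :
    blForm C p 𝒬 f ≤ blSup C p Q 𝒬 * ENNReal.ofReal (massProd p f) := by
  rw [← ENNReal.div_le_iff (ENNReal.ofReal_pos.2 (hf.massProd_pos p)).ne' ENNReal.ofReal_ne_top]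
  exact le_iSup₂_of_le f hf le_rfl

theorem normalize (hf : Admissible Q f) : Admissible Q fun i y => (∫ z, f i z)⁻¹ * f i y :=
  fun i => (hf i).smul (inv_pos.2 (hf i).integral_pos)

end Admissible

theorem admissible_gaussFn {B : ∀ i, Matrix (Fin (ni i)) (Fin (ni i)) ℝ}
    (hB : ∀ i, (B i).PosDef ∧ (Q i - B i).PosSemidef) :
    Admissible Q fun i => gaussFn (B i) :=
  fun i => semiconvexDensity_gaussFn (hB i).2 (hB i).1.integrable_gaussFn

/-- The uniform bound of the normalized densities that are more log-convex than `g_Q`. -/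
def supBound (Q : ∀ i, Matrix (Fin (ni i)) (Fin (ni i)) ℝ) (i : Fin m) : ℝ :=
  (∫ z, gaussFn (Q i) z)⁻¹

theorem supBound_pos (hQ : ∀ i, (Q i).PosDef) (i : Fin m) : 0 < supBound Q i :=
  inv_pos.2 (hQ i).integral_gaussFn_pos

theorem blSup_lt_top (hQ : ∀ i, (Q i).PosDef) (hp : ∀ i, 0 < p i) (h𝒬 : 𝒬.PosDef) :
    blSup C p Q 𝒬 < ⊤ := by
  refine lt_of_le_of_lt (iSup₂_le fun f hf => ?_)
    (blForm_const_lt_top (C := C) (p := p) h𝒬 (supBound Q))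
  rw [ENNReal.div_le_iff (ENNReal.ofReal_pos.2 (hf.massProd_pos p)).ne' ENNReal.ofReal_ne_top,
    mul_comm, massProd, ← blForm_smul (fun i => (hf i).integral_pos.le)
      fun i _ => (supBound_pos hQ i).le]
  refine blForm_mono hp hf.nonneg fun i y => ?_
  rw [mul_comm]
  exact (hf i).le_integral_div (hQ i) y

theorem blSup_pos (hQ : ∀ i, (Q i).PosDef) (hp : ∀ i, 0 < p i) : 0 < blSup C p Q 𝒬 := by
  have h : Admissible Q fun i => gaussFn (Q i) :=
    admissible_gaussFn fun i => ⟨hQ i, by simpa using Matrix.PosSemidef.zero⟩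
  refine lt_of_lt_of_le ?_ (le_iSup₂_of_le _ h le_rfl)
  exact ENNReal.div_pos (h.blForm_pos hp).ne' ENNReal.ofReal_ne_top

/-- Near-extremizers have a definite amount of mass at the origin. -/
theorem exists_mul_integral_le (hQ : ∀ i, (Q i).PosDef) (hp : ∀ i, 0 < p i) (h𝒬 : 𝒬.PosDef)
    {κ : ℝ≥0∞} (hκ : 0 < κ) :
    ∃ c : Fin m → ℝ, (∀ i, 0 < c i) ∧ ∀ u, Admissible Q u →
      κ * ENNReal.ofReal (massProd p u) ≤ blForm C p 𝒬 u → ∀ i, c i * ∫ y, u i y ≤ u i 0 := by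
  suffices h : ∀ i, ∃ c : ℝ, 0 < c ∧ ∀ u, Admissible Q u →
      κ * ENNReal.ofReal (massProd p u) ≤ blForm C p 𝒬 u → c * ∫ y, u i y ≤ u i 0 by
    choose c hc h using h
    exact ⟨c, hc, fun u hu hκu i => h i u hu hκu⟩
  intro i
  let v : ℝ → ∀ l, (Fin (ni l) → ℝ) → ℝ := fun c l y =>
    if l = i then min (supBound Q l)
      (√(c * supBound Q l) * Real.exp (Real.pi * quadForm (Q l) y)) else supBound Q l
  let v₀ : ∀ l, (Fin (ni l) → ℝ) → ℝ := fun l _ => if l = i then 0 else supBound Q l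
  have hvnn : ∀ c l y, 0 ≤ v c l y := by
    intro c l y
    have := (supBound_pos hQ l).le
    simp only [v]
    split_ifs
    · exact le_min this (by positivity)
    · exact this
  have hlim : Tendsto (fun c => blForm C p 𝒬 (v c)) (𝓝[>] 0) (𝓝 (blForm C p 𝒬 v₀)) := by
    refine tendsto_blForm hp h𝒬 (b := supBound Q) (fun c l => ?_) hvnn (fun c l y => ?_)
      fun l y => ?_
    · have := continuous_quadForm (Q l)
      simp only [v]
      split_ifs <;> fun_prop
    · simp only [v]
      split_ifs
      · exact min_le_left _ _
      · exact le_rfl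
    · simp only [v, v₀]
      split_ifs
      · have hc : Continuous fun c : ℝ => min (supBound Q l)
            (√(c * supBound Q l) * Real.exp (Real.pi * quadForm (Q l) y)) := by fun_prop
        have := (hc.tendsto 0).mono_left (nhdsWithin_le_nhds (s := Set.Ioi 0))
        simpa [min_eq_right (supBound_pos hQ l).le] using this
      · exact tendsto_const_nhds
  have hv₀ : blForm C p 𝒬 v₀ = 0 := by
    have : ∀ x, blIntegrand C p 𝒬 v₀ x = 0 := fun x => by
      rw [blIntegrand, Finset.prod_eq_zero (Finset.mem_univ i), mul_zero]
      simp [v₀, Real.zero_rpow (hp i).ne']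
    simp [blForm, this]
  rw [hv₀] at hlim
  obtain ⟨c, hcv, hc⟩ :=
    ((hlim.eventually (gt_mem_nhds hκ)).and self_mem_nhdsWithin).exists
  refine ⟨c, hc, fun u hu hκu => ?_⟩
  by_contra! hlt
  have hle : blForm C p 𝒬 u ≤ ENNReal.ofReal (massProd p u) * blForm C p 𝒬 (v c) := by
    rw [massProd, ← blForm_smul (fun l => (hu l).integral_pos.le) (hvnn c)]
    refine blForm_mono hp hu.nonneg fun l y => ?_
    have hb : ∀ y, u l y ≤ (∫ z, u l z) * supBound Q l := fun y => by
      rw [mul_comm]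
      exact (hu l).le_integral_div (hQ l) y
    simp only [v]
    split_ifs with hl
    · subst hl
      rw [mul_min_of_nonneg _ _ (hu l).integral_pos.le]
      refine le_min (hb y) ?_
      have h1 := (hu l).convexOn.le_of_univ ((2 : ℝ) • y) 0 (a := 1 / 2) (b := 1 / 2)
        (by norm_num) (by norm_num) (by norm_num)
      rw [show (1 / 2 : ℝ) • (2 : ℝ) • y + (1 / 2 : ℝ) • (0 : Fin (ni l) → ℝ) = y by module,
        quadForm_smul, quadForm_zero] at h1
      have h2 : Real.log (u l y) ≤ Real.log (√(u l ((2 : ℝ) • y) * u l 0)) +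
          Real.pi * quadForm (Q l) y := by
        rw [Real.log_sqrt (mul_pos ((hu l).pos _) ((hu l).pos _)).le,
          Real.log_mul ((hu l).pos _).ne' ((hu l).pos _).ne']
        linarith
      have h3 : u l y ≤ √(u l ((2 : ℝ) • y) * u l 0) *
          Real.exp (Real.pi * quadForm (Q l) y) := by
        rw [← Real.exp_log ((hu l).pos y),
          ← Real.exp_log (Real.sqrt_pos.2 (mul_pos ((hu l).pos ((2 : ℝ) • y)) ((hu l).pos 0))),
          ← Real.exp_add, Real.exp_le_exp]
        exact h2
      refine h3.trans ?_
      rw [← mul_assoc]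
      refine mul_le_mul_of_nonneg_right ?_ (Real.exp_pos _).le
      rw [← Real.sqrt_sq (hu l).integral_pos.le, ← Real.sqrt_mul (sq_nonneg _)]
      refine Real.sqrt_le_sqrt ?_
      calc u l ((2 : ℝ) • y) * u l 0 ≤ ((∫ z, u l z) * supBound Q l) * (c * ∫ z, u l z) :=
            mul_le_mul (hb _) hlt.le ((hu l).pos 0).le
              (mul_nonneg (hu l).integral_pos.le (supBound_pos hQ l).le)
        _ = _ := by ring
    · exact hb y
  refine absurd (hκu.trans hle) (not_le.2 ?_)
  rw [mul_comm]
  exact (ENNReal.mul_lt_mul_iff_left (ENNReal.ofReal_pos.2 (hu.massProd_pos p)).ne'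
    ENNReal.ofReal_ne_top).2 hcv

end Functional

/-! ### Existence and stability of optimal tuples -/

/-- A pointwise bounded sequence of convex functions that converges on a dense set converges
everywhere, to a convex function. -/
theorem exists_tendsto_of_convexOn {φ : ℕ → (Fin k → ℝ) → ℝ}
    (hconv : ∀ j, ConvexOn ℝ Set.univ (φ j)) (hbdd : ∀ z, ∃ b, ∀ j, |φ j z| ≤ b)
    {s : Set (Fin k → ℝ)} (hs : Dense s)
    (hlim : ∀ z ∈ s, ∃ l, Tendsto (fun j => φ j z) atTop (𝓝 l)) :
    ∃ ψ : (Fin k → ℝ) → ℝ, ConvexOn ℝ Set.univ ψ ∧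
      ∀ z, Tendsto (fun j => φ j z) atTop (𝓝 (ψ z)) := by
  have hU : ∀ U : Ultrafilter ℕ, ∃ ψ : (Fin k → ℝ) → ℝ, ConvexOn ℝ Set.univ ψ ∧
      ∀ z, Tendsto (fun j => φ j z) U (𝓝 (ψ z)) := by
    intro U
    have h : ∀ z, ∃ l, Tendsto (fun j => φ j z) U (𝓝 l) := by
      intro z
      obtain ⟨b, hb⟩ := hbdd z
      obtain ⟨l, -, hl⟩ := (isCompact_Icc (a := -b) (b := b)).ultrafilter_le_nhds
        (U.map fun j => φ j z)
        (tendsto_principal.2 (Eventually.of_forall fun j => abs_le.1 (hb j)))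
      exact ⟨l, hl⟩
    choose ψ hψ using h
    refine ⟨ψ, convexOn_univ_of_log fun x y a b ha hb hab => ?_, hψ⟩
    exact le_of_tendsto_of_tendsto' (hψ _) (((hψ x).const_mul a).add ((hψ y).const_mul b))
      fun j => (hconv j).le_of_univ x y ha hb hab
  obtain ⟨ψ, hψc, hψ⟩ := hU (hyperfilter ℕ)
  refine ⟨ψ, hψc, fun z => ?_⟩
  rw [tendsto_iff_ultrafilter]
  intro U hUle
  obtain ⟨χ, hχc, hχ⟩ := hU U
  have heq : χ = ψ := by
    refine Continuous.ext_on hs hχc.locallyLipschitz.continuous hψc.locallyLipschitz.continuous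
      fun z hz => ?_
    obtain ⟨l, hl⟩ := hlim z hz
    exact (tendsto_nhds_unique (hχ z) (hl.mono_left hUle)).trans
      (tendsto_nhds_unique (hψ z) (hl.mono_left Nat.hyperfilter_le_atTop)).symm
  rw [← heq]
  exact hχ z

/-- A compactness theorem for tuples of convex functions. -/
theorem exists_subseq_tendsto_of_convexOn {m : ℕ} {ni : Fin m → ℕ}
    {φ : ℕ → ∀ i, (Fin (ni i) → ℝ) → ℝ} (hconv : ∀ j i, ConvexOn ℝ Set.univ (φ j i))
    (hbdd : ∀ i z, ∃ b, ∀ j, |φ j i z| ≤ b) :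
    ∃ σ : ℕ → ℕ, StrictMono σ ∧ ∃ ψ : ∀ i, (Fin (ni i) → ℝ) → ℝ,
      (∀ i, ConvexOn ℝ Set.univ (ψ i)) ∧
      ∀ i z, Tendsto (fun j => φ (σ j) i z) atTop (𝓝 (ψ i z)) := by
  choose b hb using hbdd
  let pt : ∀ q : (Σ _ : Fin m, ℕ), Fin (ni q.1) → ℝ := fun q =>
    TopologicalSpace.denseSeq _ q.2
  obtain ⟨l, -, σ, hσ, hl⟩ := (isCompact_univ_pi fun q : (Σ _ : Fin m, ℕ) =>
    isCompact_Icc (a := -b q.1 (pt q)) (b := b q.1 (pt q))).tendsto_subseq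
    (x := fun (j : ℕ) (q : (Σ _ : Fin m, ℕ)) => φ j q.1 (pt q)) fun j q _ => abs_le.1 (hb _ _ j)
  have h : ∀ i, ∃ ψ : (Fin (ni i) → ℝ) → ℝ, ConvexOn ℝ Set.univ ψ ∧
      ∀ z, Tendsto (fun j => φ (σ j) i z) atTop (𝓝 (ψ z)) := by
    intro i
    refine exists_tendsto_of_convexOn (fun j => hconv _ i) (fun z => ⟨b i z, fun j => hb i z _⟩)
      (TopologicalSpace.denseRange_denseSeq (Fin (ni i) → ℝ)) ?_
    rintro _ ⟨r, rfl⟩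
    exact ⟨l ⟨i, r⟩, (tendsto_pi_nhds.1 hl) ⟨i, r⟩⟩
  choose ψ hψc hψ using h
  exact ⟨σ, hσ, ψ, hψc, hψ⟩

/-- Fatou's lemma for sequences of continuous functions. -/
theorem lintegral_ofReal_le_of_tendsto {u : ℕ → (Fin k → ℝ) → ℝ} {f : (Fin k → ℝ) → ℝ}
    {c : ℕ → ℝ≥0∞} {c' : ℝ≥0∞} (hcont : ∀ j, Continuous (u j))
    (hlim : ∀ z, Tendsto (fun j => u j z) atTop (𝓝 (f z)))
    (hle : ∀ j, ∫⁻ z, ENNReal.ofReal (u j z) ≤ c j) (hc : Tendsto c atTop (𝓝 c')) :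
    ∫⁻ z, ENNReal.ofReal (f z) ≤ c' := by
  have hlim' : ∀ z, ENNReal.ofReal (f z) = liminf (fun j => ENNReal.ofReal (u j z)) atTop :=
    fun z => ((ENNReal.continuous_ofReal.tendsto _).comp (hlim z)).liminf_eq.symm
  simp_rw [hlim']
  refine (lintegral_liminf_le fun j => (hcont j).measurable.ennreal_ofReal).trans ?_
  rw [← hc.liminf_eq]
  exact liminf_le_liminf (Eventually.of_forall hle)

section Optimal

variable {n m : ℕ} {ni : Fin m → ℕ} {C : ∀ i, Matrix (Fin (ni i)) (Fin n) ℝ} {p : Fin m → ℝ}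
  {Q : ∀ i, Matrix (Fin (ni i)) (Fin (ni i)) ℝ} {𝒬 : Matrix (Fin n) (Fin n) ℝ}
  {f g : ∀ i, (Fin (ni i) → ℝ) → ℝ}

/-- An admissible tuple attaining the best constant `blSup`. -/
structure IsOptimal (C : ∀ i, Matrix (Fin (ni i)) (Fin n) ℝ) (p : Fin m → ℝ)
    (Q : ∀ i, Matrix (Fin (ni i)) (Fin (ni i)) ℝ) (𝒬 : Matrix (Fin n) (Fin n) ℝ)
    (f : ∀ i, (Fin (ni i) → ℝ) → ℝ) : Prop where
  admissible : Admissible Q f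
  le_blForm : blSup C p Q 𝒬 * ENNReal.ofReal (massProd p f) ≤ blForm C p 𝒬 f

theorem exists_normalized_of_lt_blSup {κ : ℝ≥0∞} (hκ : κ < blSup C p Q 𝒬) :
    ∃ u, Admissible Q u ∧ (∀ i, ∫ y, u i y = 1) ∧ κ ≤ blForm C p 𝒬 u := by
  simp only [blSup, lt_iSup_iff] at hκ
  obtain ⟨u, hu, hκu⟩ := hκ
  refine ⟨_, hu.normalize, fun i => ?_, ?_⟩
  · rw [integral_const_mul, inv_mul_cancel₀ (hu i).integral_pos.ne']
  · have hN : ∏ i, (∫ y, u i y)⁻¹ ^ p i = (massProd p u)⁻¹ := by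
      simp_rw [massProd, ← Finset.prod_inv_distrib,
        fun i => Real.inv_rpow (hu i).integral_pos.le (p i)]
    rw [blForm_smul (fun i => (inv_pos.2 (hu i).integral_pos).le) hu.nonneg, hN,
      ENNReal.ofReal_inv_of_pos (hu.massProd_pos p), mul_comm, ← div_eq_mul_inv]
    exact hκu.le

theorem massProd_eq_one (h : ∀ i, ∫ y, f i y = 1) : massProd p f = 1 := by
  simp [massProd, h]

/-- For positive definite `𝒬` the best constant is attained. -/
theorem exists_isOptimal (hQ : ∀ i, (Q i).PosDef) (hp : ∀ i, 0 < p i) (h𝒬 : 𝒬.PosDef) :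
    ∃ f, IsOptimal C p Q 𝒬 f := by
  obtain ⟨κ, hκmono, hκmem, hκlim⟩ :=
    exists_seq_strictMono_tendsto' (blSup_pos (C := C) (𝒬 := 𝒬) hQ hp)
  choose u hu hu1 hκu using fun j =>
    exists_normalized_of_lt_blSup (C := C) (p := p) (Q := Q) (𝒬 := 𝒬) (hκmem j).2
  obtain ⟨c, hc, hcu⟩ := exists_mul_integral_le (C := C) hQ hp h𝒬 (hκmem 0).1
  have hc0 : ∀ j i, c i ≤ u j i 0 := fun j i => by
    have := hcu (u j) (hu j) (by
      rw [massProd_eq_one (hu1 j), ENNReal.ofReal_one, mul_one]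
      exact (hκmono.monotone (Nat.zero_le j)).trans (hκu j)) i
    rwa [hu1, mul_one] at this
  have hle : ∀ j i z, u j i z ≤ supBound Q i := fun j i z => by
    have := (hu j i).le_integral_div (hQ i) z
    rwa [hu1, mul_one] at this
  let φ : ℕ → ∀ i, (Fin (ni i) → ℝ) → ℝ := fun j i z =>
    Real.log (u j i z) + Real.pi * quadForm (Q i) z
  have hφle : ∀ j i z, φ j i z ≤ Real.log (supBound Q i) + Real.pi * quadForm (Q i) z :=
    fun j i z => by
      have := Real.log_le_log ((hu j i).pos z) (hle j i z)
      simp only [φ]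
      linarith
  have hφbdd : ∀ i z, ∃ b, ∀ j, |φ j i z| ≤ b := by
    intro i z
    refine ⟨|Real.log (supBound Q i) + Real.pi * quadForm (Q i) z| +
      |2 * Real.log (c i) - (Real.log (supBound Q i) + Real.pi * quadForm (Q i) (0 - z))|,
      fun j => abs_le.2 ⟨?_, ?_⟩⟩
    · have h1 : 2 * φ j i 0 ≤ φ j i (0 + z) + φ j i (0 - z) :=
        (hu j i).convexOn.le_half_add 0 z
      have h2 : Real.log (c i) ≤ φ j i 0 := by
        simp only [φ, quadForm_zero, mul_zero, add_zero]
        exact Real.log_le_log (hc i) (hc0 j i)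
      have h3 := hφle j i (0 - z)
      rw [zero_add] at h1
      have h4 := neg_abs_le
        (2 * Real.log (c i) - (Real.log (supBound Q i) + Real.pi * quadForm (Q i) (0 - z)))
      have h5 := abs_nonneg (Real.log (supBound Q i) + Real.pi * quadForm (Q i) z)
      linarith
    · exact (hφle j i z).trans ((le_abs_self _).trans (le_add_of_nonneg_right (abs_nonneg _)))
  obtain ⟨σ, hσ, ψ, hψc, hψ⟩ :=
    exists_subseq_tendsto_of_convexOn (fun j i => (hu j i).convexOn) hφbdd
  let f : ∀ i, (Fin (ni i) → ℝ) → ℝ := fun i z =>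
    Real.exp (ψ i z - Real.pi * quadForm (Q i) z)
  have hlim : ∀ i z, Tendsto (fun j => u (σ j) i z) atTop (𝓝 (f i z)) := by
    intro i z
    have h := (Real.continuous_exp.tendsto _).comp
      ((hψ i z).sub_const (Real.pi * quadForm (Q i) z))
    refine h.congr fun j => ?_
    simp only [Function.comp_apply]
    rw [add_sub_cancel_right, Real.exp_log ((hu _ i).pos z)]
  have hfcont : ∀ i, Continuous (f i) := fun i =>
    Real.continuous_exp.comp ((hψc i).locallyLipschitz.continuous.sub
      (continuous_const.mul (continuous_quadForm _)))
  have hfint : ∀ i, ∫⁻ z, ENNReal.ofReal (f i z) ≤ 1 := fun i =>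
    lintegral_ofReal_le_of_tendsto (fun j => (hu (σ j) i).continuous) (hlim i) (fun j => by
      rw [← (hu (σ j) i).ofReal_integral, hu1, ENNReal.ofReal_one]) tendsto_const_nhds
  have hf : Admissible Q f := fun i => by
    refine ⟨fun z => Real.exp_pos _, ?_, ⟨(hfcont i).aestronglyMeasurable, ?_⟩⟩
    · simpa only [f, Real.log_exp, sub_add_cancel] using hψc i
    · rw [hasFiniteIntegral_iff_ofReal (Eventually.of_forall fun z => (Real.exp_pos _).le)]
      exact (hfint i).trans_lt ENNReal.one_lt_top
  refine ⟨f, hf, ?_⟩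
  have hmass : ENNReal.ofReal (massProd p f) ≤ 1 := by
    refine ENNReal.ofReal_le_one.2 (Finset.prod_le_one
      (fun i _ => Real.rpow_nonneg (hf i).integral_pos.le _) fun i _ =>
      Real.rpow_le_one (hf i).integral_pos.le ?_ (hp i).le)
    rw [← ENNReal.ofReal_le_one, (hf i).ofReal_integral]
    exact hfint i
  have hblf : blSup C p Q 𝒬 ≤ blForm C p 𝒬 f :=
    le_of_tendsto_of_tendsto' (hκlim.comp hσ.tendsto_atTop)
      (tendsto_blForm (b := supBound Q) hp h𝒬 (fun j i => (hu (σ j) i).continuous)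
        (fun j => (hu (σ j)).nonneg) (fun j => hle (σ j)) hlim) fun j => hκu (σ j)
  exact (mul_le_of_le_one_right' hmass).trans hblf

namespace IsOptimal

/-- Optimal tuples stay optimal under `f ↦ fᵢ((Cᵢx + z)/√2) fᵢ((Cᵢx - z)/√2)`. -/
theorem rotTuple (hf : IsOptimal C p Q 𝒬 f) (hQ : ∀ i, (Q i).PosDef) (hp : ∀ i, 0 < p i)
    (h𝒬 : 𝒬.PosDef) (x : Fin n → ℝ) : IsOptimal C p Q 𝒬 (rotTuple C f f x) := by
  have ha := hf.admissible
  refine ⟨ha.rotTuple ha hQ x, ?_⟩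
  set K := blSup C p Q 𝒬
  have hK : K ≠ ⊤ := (blSup_lt_top hQ hp h𝒬).ne
  have hconvc : Continuous fun x => massProd p (_root_.rotTuple C f f x) := by
    simp only [massProd, _root_.rotTuple, ← conv_eq_integral_rotPair]
    exact continuous_finsetProd _ fun i _ => (((ha.conv ha hQ) i).continuous.comp
      (continuous_const.matrix_mulVec continuous_id)).rpow_const fun x => Or.inr (hp i).le
  have hL : Continuous fun x => blForm C p 𝒬 (_root_.rotTuple C f f x) := by
    refine continuous_iff_continuousAt.2 fun x => ?_
    refine tendsto_blForm hp h𝒬 (b := fun i => (supBound Q i * ∫ y, f i y) *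
      (supBound Q i * ∫ y, f i y)) (fun t i => (ha.rotTuple ha hQ t i).continuous)
      (fun t => (ha.rotTuple ha hQ t).nonneg) (fun t i y => ?_) fun i y => ?_
    · exact mul_le_mul ((ha i).le_integral_div (hQ i) _) ((ha i).le_integral_div (hQ i) _)
        ((ha i).pos _).le (mul_pos (supBound_pos hQ i) (ha i).integral_pos).le
    · have hc : Continuous fun t => rotPair (f i) (f i) ((C i).mulVec t) y :=
        ((ha i).continuous_rotPair (ha i)).comp
          ((continuous_const.matrix_mulVec continuous_id).prodMk continuous_const)
      exact hc.tendsto x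
  have hR : Continuous fun x => K * ENNReal.ofReal (massProd p (_root_.rotTuple C f f x)) :=
    (ENNReal.continuous_const_mul hK).comp (ENNReal.continuous_ofReal.comp hconvc)
  have hW : Continuous fun x => ENNReal.ofReal (gaussFn 𝒬 x) :=
    ENNReal.continuous_ofReal.comp (continuous_gaussFn 𝒬)
  have hle : ∀ x, blForm C p 𝒬 (_root_.rotTuple C f f x) ≤
      K * ENNReal.ofReal (massProd p (_root_.rotTuple C f f x)) :=
    fun x => (ha.rotTuple ha hQ x).blForm_le
  have hfin : blForm C p 𝒬 f ≠ ⊤ :=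
    (ha.blForm_le.trans_lt (ENNReal.mul_lt_top hK.lt_top ENNReal.ofReal_lt_top)).ne
  have hae := ae_eq_of_ae_le_of_lintegral_le (μ := volume)
    (f := fun x => ENNReal.ofReal (gaussFn 𝒬 x) * blForm C p 𝒬 (_root_.rotTuple C f f x))
    (g := fun x => ENNReal.ofReal (gaussFn 𝒬 x) *
      (K * ENNReal.ofReal (massProd p (_root_.rotTuple C f f x))))
    (Eventually.of_forall fun x => mul_le_mul_right (hle x) _)
    (by rw [← ha.blForm_mul_blForm ha hp]; exact ENNReal.mul_ne_top hfin hfin)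
    (hW.measurable.mul hR.measurable).aemeasurable
    (by
      rw [← ha.blForm_mul_blForm ha hp, ha.lintegral_const_mul_massProd ha hQ hp]
      refine (mul_le_mul_right (ha.conv ha hQ).blForm_le K).trans ?_
      rw [ha.massProd_conv ha hQ, ENNReal.ofReal_mul (ha.massProd_pos p).le]
      calc K * (K * (ENNReal.ofReal (massProd p f) * ENNReal.ofReal (massProd p f))) =
          (K * ENNReal.ofReal (massProd p f)) * (K * ENNReal.ofReal (massProd p f)) := by ring
        _ ≤ _ := mul_le_mul' hf.le_blForm hf.le_blForm)
  have hae' : (fun x => blForm C p 𝒬 (_root_.rotTuple C f f x)) =ᵐ[volume]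
      fun x => K * ENNReal.ofReal (massProd p (_root_.rotTuple C f f x)) :=
    hae.mono fun x hx => (ENNReal.mul_right_inj
      (ENNReal.ofReal_pos.2 (gaussFn_pos 𝒬 x)).ne' ENNReal.ofReal_ne_top).1 hx
  exact (congrFun ((hL.ae_eq_iff_eq volume hR).1 hae') x).ge

end IsOptimal

end Optimal

/-! ### Second-order differentiability of convex functions with bounded second differences -/

section ConvexRegularity

variable {E : Type*} [NormedAddCommGroup E] [NormedSpace ℝ E] {φ : E → ℝ}

/-- A continuous convex function has a subgradient at every point. -/
theorem ConvexOn.exists_subgradient (hφ : ConvexOn ℝ Set.univ φ) (hcont : Continuous φ) (x : E) :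
    ∃ D : E →L[ℝ] ℝ, ∀ w, D w ≤ φ (x + w) - φ x := by
  have hconv : Convex ℝ {q : E × ℝ | φ q.1 < q.2} := by
    simpa using hφ.convex_strict_epigraph
  have hopen : IsOpen {q : E × ℝ | φ q.1 < q.2} :=
    isOpen_lt (hcont.comp continuous_fst) continuous_snd
  obtain ⟨F, hF⟩ := geometric_hahn_banach_open_point hconv hopen (x := (x, φ x)) (by simp)
  have hsplit : ∀ (y : E) (t : ℝ), F (y, t) = F (y, 0) + t * F (0, 1) := by
    intro y t
    rw [← smul_eq_mul, ← map_smul, ← map_add]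
    simp
  have hα : F (0, 1) < 0 := by
    have h := hF (x, φ x + 1) (by simp)
    rw [hsplit x, hsplit x (φ x)] at h
    linarith
  have hle : ∀ y, F (y, 0) + φ y * F (0, 1) ≤ F (x, 0) + φ x * F (0, 1) := by
    intro y
    refine le_of_forall_pos_lt_add fun ε hε => ?_
    have h := hF (y, φ y + ε / -F (0, 1)) (by simpa using div_pos hε (neg_pos.2 hα))
    rw [hsplit y, hsplit x] at h
    have hd : ε / -F (0, 1) * F (0, 1) = -ε := by
      rw [div_neg, neg_mul, div_mul_cancel₀ _ hα.ne]
    linarith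
  refine ⟨(-F (0, 1))⁻¹ • F.comp (ContinuousLinearMap.inl ℝ E ℝ), fun w => ?_⟩
  have h := hle (x + w)
  have hadd : F (x + w, 0) = F (x, 0) + F (w, 0) := by
    rw [← map_add]
    simp
  rw [hadd] at h
  simp only [_root_.smul_apply, ContinuousLinearMap.comp_apply,
    ContinuousLinearMap.inl_apply, smul_eq_mul]
  rw [inv_mul_le_iff₀ (neg_pos.2 hα)]
  linarith

/-- A convex function whose second differences are `O(‖w‖²)` is differentiable with Lipschitz
derivative. -/
theorem ConvexOn.exists_lipschitzWith_hasFDerivAt (hφ : ConvexOn ℝ Set.univ φ)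
    (hcont : Continuous φ) {c : ℝ} (hc : 0 ≤ c)
    (hsec : ∀ x w, φ (x + w) + φ (x - w) - 2 * φ x ≤ c * ‖w‖ ^ 2) :
    ∃ D : E → E →L[ℝ] ℝ, (∀ x, HasFDerivAt φ (D x) x) ∧ ∃ K, LipschitzWith K D := by
  choose D hD using hφ.exists_subgradient hcont
  have hupper : ∀ x w, φ (x + w) - φ x ≤ D x w + c * ‖w‖ ^ 2 := by
    intro x w
    have h1 := hsec x w
    have h2 := hD x (-w)
    rw [map_neg, ← sub_eq_add_neg] at h2
    linarith
  refine ⟨D, fun x => ?_, (4 * c).toNNReal, LipschitzWith.of_dist_le_mul fun x y => ?_⟩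
  · rw [hasFDerivAt_iff_isLittleO_nhds_zero]
    refine Asymptotics.IsBigO.trans_isLittleO (g := fun w : E => ‖w‖ ^ 2) ?_ ?_
    · refine Asymptotics.IsBigO.of_bound c (Eventually.of_forall fun w => ?_)
      rw [Real.norm_eq_abs, abs_of_nonneg (by linarith [hD x w]), norm_pow, norm_norm]
      linarith [hupper x w]
    · exact Asymptotics.isLittleO_norm_pow_id one_lt_two
  · have key : ∀ v, (D x - D y) v ≤ c * (‖v‖ + ‖x - y‖) ^ 2 := by
      intro v
      have h1 := hD x v
      have h2 := hupper y (v + (x - y))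
      have h3 := hD y (x - y)
      rw [show y + (v + (x - y)) = x + v by abel, map_add] at h2
      rw [add_sub_cancel] at h3
      have h4 : c * ‖v + (x - y)‖ ^ 2 ≤ c * (‖v‖ + ‖x - y‖) ^ 2 := by
        gcongr
        exact norm_add_le _ _
      rw [_root_.sub_apply]
      linarith
    have hle : ∀ v, (D x - D y) v ≤ 4 * c * ‖x - y‖ * ‖v‖ := by
      intro v
      rcases eq_or_ne v 0 with rfl | hv
      · simp
      rcases eq_or_ne (x - y) 0 with hxy | hxy
      · rw [sub_eq_zero.1 hxy]
        simp
      have hv' := norm_pos_iff.2 hv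
      have hxy' := norm_pos_iff.2 hxy
      have h := key ((‖x - y‖ / ‖v‖) • v)
      rw [map_smul, norm_smul, norm_div, norm_norm, norm_norm, div_mul_cancel₀ _ hv'.ne',
        smul_eq_mul, div_mul_eq_mul_div, div_le_iff₀ hv'] at h
      have h5 : ‖x - y‖ * (D x - D y) v ≤ ‖x - y‖ * (4 * c * ‖x - y‖ * ‖v‖) := by
        linarith [h]
      exact le_of_mul_le_mul_left h5 hxy'
    rw [dist_eq_norm, dist_eq_norm, Real.coe_toNNReal _ (by positivity)]
    refine ContinuousLinearMap.opNorm_le_bound _ (by positivity) fun v => ?_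
    rw [Real.norm_eq_abs, abs_le]
    have h1 := hle v
    have h2 := hle (-v)
    rw [map_neg, norm_neg] at h2
    exact ⟨by linarith, h1⟩

/-- The second differences of a function with differentiable derivative. -/
theorem tendsto_second_difference {D : E → E →L[ℝ] ℝ} (hD : ∀ x, HasFDerivAt φ (D x) x)
    {x : E} {A : E →L[ℝ] E →L[ℝ] ℝ} (hA : HasFDerivAt D A x) (w : E) :
    Tendsto (fun t : ℝ => (φ (x + t • w) + φ (x - t • w) - 2 * φ x) / t ^ 2) (𝓝[≠] 0)
      (𝓝 (A w w)) := by
  have hplus : ∀ t : ℝ, HasDerivAt (fun t : ℝ => x + t • w) w t := fun t => by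
    simpa using ((hasDerivAt_id t).smul_const w).const_add x
  have hminus : ∀ t : ℝ, HasDerivAt (fun t : ℝ => x - t • w) (-w) t := fun t => by
    simpa using ((hasDerivAt_id t).smul_const w).const_sub x
  have hnum : ∀ t : ℝ, HasDerivAt (fun t : ℝ => φ (x + t • w) + φ (x - t • w) - 2 * φ x)
      (D (x + t • w) w - D (x - t • w) w) t := by
    intro t
    have h := (((hD _).comp_hasDerivAt t (hplus t)).add
      ((hD _).comp_hasDerivAt t (hminus t))).sub_const (2 * φ x)
    simpa [sub_eq_add_neg] using h
  have hder : HasDerivAt (fun t : ℝ => D (x + t • w) w - D (x - t • w) w) (2 * A w w) 0 := by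
    have h1 : HasDerivAt (fun t : ℝ => D (x + t • w)) (A w) 0 :=
      HasFDerivAt.comp_hasDerivAt_of_eq 0 hA (hplus 0) (by simp)
    have h2 : HasDerivAt (fun t : ℝ => D (x - t • w)) (A (-w)) 0 :=
      HasFDerivAt.comp_hasDerivAt_of_eq 0 hA (hminus 0) (by simp)
    have h := (h1.clm_apply (hasDerivAt_const 0 w)).sub (h2.clm_apply (hasDerivAt_const 0 w))
    simp only [map_zero, add_zero, map_neg, _root_.neg_apply, sub_neg_eq_add,
      ← two_mul] at h
    exact h
  refine HasDerivAt.lhopital_zero_nhdsNE (Eventually.of_forall hnum)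
    (Eventually.of_forall fun t => by simpa using hasDerivAt_pow 2 t) ?_ ?_ ?_ ?_
  · filter_upwards [self_mem_nhdsWithin] with t ht
    simpa using ht
  · have h := (hnum 0).continuousAt.tendsto
    simp only [zero_smul, add_zero, sub_zero] at h
    rw [show φ x + φ x - 2 * φ x = 0 by ring] at h
    exact h.mono_left nhdsWithin_le_nhds
  · have h := ((continuous_pow 2).tendsto (0 : ℝ)).mono_left (nhdsWithin_le_nhds (s := {0}ᶜ))
    simpa using h
  · have h := hder.tendsto_slope_zero.div_const 2
    refine (h.congr' ?_).trans (by simp)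
    filter_upwards with t
    simp only [zero_add, zero_smul, add_zero, sub_zero, sub_self, smul_eq_mul]
    ring

end ConvexRegularity

/-! ### Gaussian optimal tuples -/

theorem exists_quadForm_le (Q : Matrix (Fin k) (Fin k) ℝ) :
    ∃ c : ℝ, 0 ≤ c ∧ ∀ w, quadForm Q w ≤ c * ‖w‖ ^ 2 := by
  refine ⟨∑ i, ∑ j, |Q i j|, by positivity, fun w => ?_⟩
  simp only [quadForm, dotProduct, mulVec, Finset.sum_mul]
  refine Finset.sum_le_sum fun i _ => Finset.sum_le_sum fun j _ => ?_
  rw [mul_assoc]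
  refine (le_abs_self _).trans ?_
  rw [abs_mul, abs_mul, sq]
  gcongr
  · exact norm_le_pi_norm w j
  · exact norm_le_pi_norm w i

/-- Every bilinear form has the same diagonal as a symmetric matrix. -/
theorem exists_isSymm_quadForm_eq (A : (Fin k → ℝ) →L[ℝ] (Fin k → ℝ) →L[ℝ] ℝ) :
    ∃ S : Matrix (Fin k) (Fin k) ℝ, S.IsSymm ∧ ∀ w, quadForm S w = A w w := by
  let T : Matrix (Fin k) (Fin k) ℝ := Matrix.of fun i j => A (Pi.single i 1) (Pi.single j 1)
  refine ⟨(2 : ℝ)⁻¹ • (T + Tᵀ), ?_, fun w => ?_⟩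
  · rw [Matrix.IsSymm, transpose_smul, transpose_add, transpose_transpose, add_comm]
  · have hw : w = ∑ i, w i • (Pi.single i 1 : Fin k → ℝ) := by
      simpa using (pi_eq_sum_univ' w)
    have hA : A w w = quadForm T w := by
      conv_lhs => rw [hw]
      simp only [map_sum, map_smul, quadForm, dotProduct, mulVec, Finset.sum_mul, T, of_apply,
        _root_.sum_apply, _root_.smul_apply, smul_eq_mul]
      rw [Finset.sum_comm]
      refine Finset.sum_congr rfl fun i _ => ?_
      rw [Finset.mul_sum]
      exact Finset.sum_congr rfl fun j _ => by ring
    have hT : quadForm Tᵀ w = quadForm T w := by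
      rw [quadForm, quadForm, mulVec_transpose, ← dotProduct_mulVec, dotProduct_comm]
    have hadd : quadForm ((2 : ℝ)⁻¹ • (T + Tᵀ)) w = 2⁻¹ * (quadForm T w + quadForm Tᵀ w) := by
      simp only [quadForm, smul_mulVec, add_mulVec, smul_dotProduct, add_dotProduct, smul_eq_mul]
    rw [hadd, hT, hA]
    ring

theorem posSemidef_of_quadForm_nonneg {A : Matrix (Fin k) (Fin k) ℝ} (hA : A.IsSymm)
    (h : ∀ w, 0 ≤ quadForm A w) : A.PosSemidef := by
  refine PosSemidef.of_dotProduct_mulVec_nonneg ?_ fun w => ?_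
  · rw [Matrix.IsHermitian, conjTranspose_eq_transpose_of_trivial]
    exact hA
  · rw [star_trivial, dotProduct_comm]
    exact h w

/-- A degenerate centered Gaussian is not integrable. -/
theorem Matrix.PosSemidef.posDef_of_integrable_gaussFn {B : Matrix (Fin k) (Fin k) ℝ}
    (hB : B.PosSemidef) (hi : Integrable (gaussFn B)) : B.PosDef := by
  set I := ∫ z, gaussFn B z
  have hle : ∀ ε : ℝ, 0 < ε → I⁻¹ ^ 2 ≤ (B + ε • (1 : Matrix (Fin k) (Fin k) ℝ)).det := by
    intro ε hε
    have hpd : (B + ε • (1 : Matrix (Fin k) (Fin k) ℝ)).PosDef :=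
      PosDef.posSemidef_add hB (PosDef.one.smul hε)
    have hd : SemiconvexDensity (B + ε • (1 : Matrix (Fin k) (Fin k) ℝ)) (gaussFn B) :=
      semiconvexDensity_gaussFn (by
        rw [add_sub_cancel_left]
        exact PosSemidef.one.smul hε.le) hi
    have h := hd.mul_integral_gaussFn_le hpd 0
    rw [gaussFn_eq, quadForm_zero, mul_zero, neg_zero, Real.exp_zero, one_mul,
      hpd.integral_gaussFn] at h
    have hdet := Real.rpow_pos_of_pos hpd.det_pos (2 : ℝ)⁻¹
    have h2 : I⁻¹ ≤ (B + ε • (1 : Matrix (Fin k) (Fin k) ℝ)).det ^ (2 : ℝ)⁻¹ :=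
      inv_le_of_inv_le₀ hdet h
    calc I⁻¹ ^ 2 ≤ ((B + ε • (1 : Matrix (Fin k) (Fin k) ℝ)).det ^ (2 : ℝ)⁻¹) ^ 2 :=
          pow_le_pow_left₀ (inv_pos.2 hd.integral_pos).le h2 2
      _ = _ := by
        rw [← Real.rpow_natCast, ← Real.rpow_mul hpd.det_pos.le]
        norm_num
  have hI : 0 < I := (semiconvexDensity_gaussFn (Q := B)
    (by simpa using Matrix.PosSemidef.zero) hi).integral_pos
  have hcont : Continuous fun ε : ℝ => (B + ε • (1 : Matrix (Fin k) (Fin k) ℝ)).det := by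
    fun_prop
  have hlim : Tendsto (fun ε : ℝ => (B + ε • (1 : Matrix (Fin k) (Fin k) ℝ)).det) (𝓝[>] 0)
      (𝓝 B.det) := by
    have := (hcont.tendsto 0).mono_left (nhdsWithin_le_nhds (s := Set.Ioi 0))
    simpa using this
  have hdet : I⁻¹ ^ 2 ≤ B.det := ge_of_tendsto hlim (by
    filter_upwards [self_mem_nhdsWithin] with ε hε using hle ε hε)
  exact hB.posDef_iff_det_ne_zero.2 (lt_of_lt_of_le (by positivity) hdet).ne'

section GaussianOptimal

variable {n m : ℕ} {ni : Fin m → ℕ} {C : ∀ i, Matrix (Fin (ni i)) (Fin n) ℝ} {p : Fin m → ℝ}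
  {Q : ∀ i, Matrix (Fin (ni i)) (Fin (ni i)) ℝ} {𝒬 : Matrix (Fin n) (Fin n) ℝ}
  {f g : ∀ i, (Fin (ni i) → ℝ) → ℝ}

namespace IsOptimal

theorem smul (hf : IsOptimal C p Q 𝒬 f) {a : Fin m → ℝ} (ha : ∀ i, 0 < a i) :
    IsOptimal C p Q 𝒬 fun i y => a i * f i y := by
  refine ⟨fun i => (hf.admissible i).smul (ha i), ?_⟩
  have hN : massProd p (fun i y => a i * f i y) = (∏ i, a i ^ p i) * massProd p f := by
    simp_rw [massProd, integral_const_mul, ← Finset.prod_mul_distrib]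
    exact Finset.prod_congr rfl fun i _ =>
      Real.mul_rpow (ha i).le (hf.admissible i).integral_pos.le
  rw [blForm_smul (fun i => (ha i).le) hf.admissible.nonneg, hN,
    ENNReal.ofReal_mul (Finset.prod_nonneg fun i _ => Real.rpow_nonneg (ha i).le _),
    mul_left_comm]
  exact mul_le_mul_right hf.le_blForm _

/-- Rescaled powers of even optimal tuples are optimal. -/
theorem rescale (hf : IsOptimal C p Q 𝒬 f) (heven : ∀ i z, f i (-z) = f i z)
    (hQ : ∀ i, (Q i).PosDef) (hp : ∀ i, 0 < p i) (h𝒬 : 𝒬.PosDef) (j : ℕ) :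
    IsOptimal C p Q 𝒬 fun i z => f i ((√2 : ℝ)⁻¹ ^ j • z) ^ 2 ^ j := by
  induction j with
  | zero => simpa using hf
  | succ j ih =>
    convert ih.rotTuple hQ hp h𝒬 0 using 1
    funext i z
    simp only [_root_.rotTuple, rotPair, mulVec_zero, zero_add, zero_sub, smul_neg, heven,
      smul_smul]
    rw [pow_succ (√2 : ℝ)⁻¹, pow_succ 2 j, pow_mul, sq]

theorem rotTuple_neg (x : Fin n → ℝ) (i : Fin m) (z : Fin (ni i) → ℝ) :
    _root_.rotTuple C f f x i (-z) = _root_.rotTuple C f f x i z := by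
  rw [_root_.rotTuple, rotPair, rotPair, ← sub_eq_add_neg, sub_neg_eq_add, mul_comm]

/-- Even optimal tuples have their maximum at the origin. -/
theorem le_apply_zero (hf : IsOptimal C p Q 𝒬 f) (heven : ∀ i z, f i (-z) = f i z)
    (hQ : ∀ i, (Q i).PosDef) (hp : ∀ i, 0 < p i) (h𝒬 : 𝒬.PosDef) (i : Fin m)
    (z : Fin (ni i) → ℝ) : f i z ≤ f i 0 := by
  obtain ⟨c, hc, h⟩ := exists_mul_integral_le (C := C) hQ hp h𝒬
    (blSup_pos (C := C) (Q := Q) (𝒬 := 𝒬) hQ hp)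
  have hbound : ∀ j : ℕ, (f i z / f i 0) ^ 2 ^ j ≤ supBound Q i / c i := by
    intro j
    have hj := hf.rescale heven hQ hp h𝒬 j
    have h1 := h _ hj.admissible hj.le_blForm i
    have h2 := (hj.admissible i).le_integral_div (hQ i) ((√2 : ℝ) ^ j • z)
    simp only [smul_zero] at h1
    rw [smul_smul, ← mul_pow, inv_mul_cancel₀ sqrt_two_ne_zero, one_pow, one_smul] at h2
    rw [div_pow, div_le_div_iff₀ (pow_pos (hf.admissible i |>.pos 0) _) (hc i)]
    have hM := (supBound_pos hQ i).le
    calc f i z ^ 2 ^ j * c i ≤ (supBound Q i * ∫ y, f i ((√2 : ℝ)⁻¹ ^ j • y) ^ 2 ^ j) * c i :=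
          mul_le_mul_of_nonneg_right h2 (hc i).le
      _ = supBound Q i * (c i * ∫ y, f i ((√2 : ℝ)⁻¹ ^ j • y) ^ 2 ^ j) := by ring
      _ ≤ supBound Q i * f i 0 ^ 2 ^ j := mul_le_mul_of_nonneg_left h1 hM
  have h0 := (hf.admissible i).pos 0
  rw [← div_le_one h0]
  by_contra! hlt
  have hpow : Tendsto (fun j : ℕ => (f i z / f i 0) ^ 2 ^ j) atTop atTop :=
    (tendsto_pow_atTop_atTop_of_one_lt hlt).comp (tendsto_pow_atTop_atTop_of_one_lt one_lt_two)
  obtain ⟨j, hj⟩ := (hpow.eventually_gt_atTop (supBound Q i / c i)).exists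
  exact absurd (hbound j) (not_le.2 hj)

theorem mul_apply_le_sq (hf : IsOptimal C p Q 𝒬 f) (hQ : ∀ i, (Q i).PosDef)
    (hp : ∀ i, 0 < p i) (h𝒬 : 𝒬.PosDef) {i : Fin m} (hC : Function.Surjective (C i).mulVec)
    (x w : Fin (ni i) → ℝ) : f i (x + w) * f i (x - w) ≤ f i x * f i x := by
  obtain ⟨y, hy⟩ := hC ((√2 : ℝ) • x)
  have h := (hf.rotTuple hQ hp h𝒬 y).le_apply_zero (rotTuple_neg y) hQ hp h𝒬 i ((√2 : ℝ) • w)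
  simpa only [_root_.rotTuple, rotPair, hy, ← smul_add, ← smul_sub, add_zero, sub_zero,
    inv_smul_smul₀ sqrt_two_ne_zero] using h

theorem second_difference_le (hf : IsOptimal C p Q 𝒬 f) (hQ : ∀ i, (Q i).PosDef)
    (hp : ∀ i, 0 < p i) (h𝒬 : 𝒬.PosDef) {i : Fin m} (hC : Function.Surjective (C i).mulVec)
    (x w : Fin (ni i) → ℝ) :
    (Real.log (f i (x + w)) + Real.pi * quadForm (Q i) (x + w)) +
      (Real.log (f i (x - w)) + Real.pi * quadForm (Q i) (x - w)) -
      2 * (Real.log (f i x) + Real.pi * quadForm (Q i) x) ≤ 2 * Real.pi * quadForm (Q i) w := by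
  have hpos := (hf.admissible i).pos
  have h := Real.log_le_log (mul_pos (hpos _) (hpos _)) (hf.mul_apply_le_sq hQ hp h𝒬 hC x w)
  rw [Real.log_mul (hpos _).ne' (hpos _).ne', Real.log_mul (hpos _).ne' (hpos _).ne'] at h
  have hq := congrArg (Real.pi * ·) (quadForm_add_add_quadForm_sub (Q i) x w)
  linarith

/-- An optimal tuple is twice differentiable at the images of some common point. -/
theorem exists_hasFDerivAt (hf : IsOptimal C p Q 𝒬 f) (hQ : ∀ i, (Q i).PosDef)
    (hp : ∀ i, 0 < p i) (h𝒬 : 𝒬.PosDef) (hC : ∀ i, Function.Surjective (C i).mulVec) :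
    ∃ x : Fin n → ℝ, ∀ i, ∃ S : Matrix (Fin (ni i)) (Fin (ni i)) ℝ, S.IsSymm ∧
      ∀ w, Tendsto (fun t : ℝ =>
        ((Real.log (f i ((C i).mulVec x + t • w)) +
            Real.pi * quadForm (Q i) ((C i).mulVec x + t • w)) +
          (Real.log (f i ((C i).mulVec x - t • w)) +
            Real.pi * quadForm (Q i) ((C i).mulVec x - t • w)) -
          2 * (Real.log (f i ((C i).mulVec x)) + Real.pi * quadForm (Q i) ((C i).mulVec x))) /
          t ^ 2) (𝓝[≠] 0) (𝓝 (quadForm S w)) := by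
  have hD : ∀ i, ∃ D : (Fin (ni i) → ℝ) → (Fin (ni i) → ℝ) →L[ℝ] ℝ,
      (∀ x, HasFDerivAt (fun x => Real.log (f i x) + Real.pi * quadForm (Q i) x) (D x) x) ∧
      ∃ K, LipschitzWith K D := by
    intro i
    obtain ⟨c, hc, hcQ⟩ := exists_quadForm_le (Q i)
    have hconv := (hf.admissible i).convexOn
    refine hconv.exists_lipschitzWith_hasFDerivAt hconv.locallyLipschitz.continuous
      (c := 2 * Real.pi * c) (by positivity) fun x w => ?_
    refine (hf.second_difference_le hQ hp h𝒬 (hC i) x w).trans ?_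
    rw [mul_assoc (2 * Real.pi)]
    exact mul_le_mul_of_nonneg_left (hcQ w) (by positivity)
  choose D hD hLip using hD
  have hae : ∀ i, ∀ᵐ x : Fin n → ℝ, DifferentiableAt ℝ (D i) ((C i).mulVec x) := by
    intro i
    obtain ⟨K, hK⟩ := hLip i
    exact (ae_comp_linearMap_mem_iff (C i).mulVecLin volume volume (hC i)
      (measurableSet_of_differentiableAt ℝ (D i))).2 hK.ae_differentiableAt
  obtain ⟨x, hx⟩ := (eventually_countable_forall.2 hae).exists
  refine ⟨x, fun i => ?_⟩
  obtain ⟨S, hS, hSw⟩ := exists_isSymm_quadForm_eq (fderiv ℝ (D i) ((C i).mulVec x))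
  refine ⟨S, hS, fun w => ?_⟩
  rw [hSw]
  exact tendsto_second_difference (hD i) (hx i).hasFDerivAt w

/-- The normalized, recentered square of an optimal tuple. -/
theorem normalizedRot (hf : IsOptimal C p Q 𝒬 f) (hQ : ∀ i, (Q i).PosDef)
    (hp : ∀ i, 0 < p i) (h𝒬 : 𝒬.PosDef) (x : Fin n → ℝ) :
    IsOptimal C p Q 𝒬 fun i z =>
      (_root_.rotTuple C f f x i 0)⁻¹ * _root_.rotTuple C f f x i z :=
  (hf.rotTuple hQ hp h𝒬 x).smul fun i => inv_pos.2 ((hf.rotTuple hQ hp h𝒬 x).admissible i |>.pos 0)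

end IsOptimal

/-- For positive definite `𝒬` some tuple of centered Gaussians attains the best constant. -/
theorem exists_isOptimal_gaussFn (hQ : ∀ i, (Q i).PosDef) (hp : ∀ i, 0 < p i) (h𝒬 : 𝒬.PosDef)
    (hC : ∀ i, Function.Surjective (C i).mulVec) :
    ∃ B : ∀ i, Matrix (Fin (ni i)) (Fin (ni i)) ℝ,
      (∀ i, (B i).PosDef ∧ (Q i - B i).PosSemidef) ∧
      IsOptimal C p Q 𝒬 fun i => gaussFn (B i) := by
  obtain ⟨f, hf⟩ := exists_isOptimal (C := C) hQ hp h𝒬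
  obtain ⟨x, hx⟩ := hf.exists_hasFDerivAt hQ hp h𝒬 hC
  choose S hSsymm hS using hx
  let φ : ∀ i, (Fin (ni i) → ℝ) → ℝ := fun i z =>
    Real.log (f i z) + Real.pi * quadForm (Q i) z
  let Δ : ∀ i, (Fin (ni i) → ℝ) → ℝ := fun i w =>
    φ i ((C i).mulVec x + w) + φ i ((C i).mulVec x - w) - 2 * φ i ((C i).mulVec x)
  have hΔnn : ∀ i w, 0 ≤ Δ i w := fun i w => by
    have h : 2 * φ i ((C i).mulVec x) ≤ _ :=
      (hf.admissible i).convexOn.le_half_add ((C i).mulVec x) w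
    exact sub_nonneg.2 h
  have hSnn : ∀ i w, 0 ≤ quadForm (S i) w := fun i w =>
    ge_of_tendsto' (hS i w) fun t => div_nonneg (hΔnn i _) (sq_nonneg t)
  let v : ∀ i, (Fin (ni i) → ℝ) → ℝ := fun i z =>
    (rotTuple C f f ((√2 : ℝ) • x) i 0)⁻¹ * rotTuple C f f ((√2 : ℝ) • x) i z
  have hv : IsOptimal C p Q 𝒬 v := hf.normalizedRot hQ hp h𝒬 _
  have hveven : ∀ i z, v i (-z) = v i z := fun i z => by
    simp only [v, IsOptimal.rotTuple_neg]
  have hv0 : ∀ i, v i 0 = 1 := fun i =>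
    inv_mul_cancel₀ ((hf.rotTuple hQ hp h𝒬 _).admissible i |>.pos 0).ne'
  have hvexp : ∀ i z, v i z =
      Real.exp (Δ i ((√2 : ℝ)⁻¹ • z) - Real.pi * quadForm (Q i) z) := by
    intro i z
    have hpos := (hf.admissible i).pos
    have hrot : ∀ z, rotTuple C f f ((√2 : ℝ) • x) i z =
        f i ((C i).mulVec x + (√2 : ℝ)⁻¹ • z) * f i ((C i).mulVec x - (√2 : ℝ)⁻¹ • z) := by
      intro z
      rw [rotTuple, rotPair, mulVec_smul, smul_add, smul_sub, inv_smul_smul₀ sqrt_two_ne_zero]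
    have hq := quadForm_add_add_quadForm_sub (Q i) ((C i).mulVec x) ((√2 : ℝ)⁻¹ • z)
    rw [quadForm_smul (Q i) _ z, inv_sqrt_two_sq] at hq
    rw [← Real.exp_log (hv.admissible i |>.pos z)]
    congr 1
    simp only [v, hrot, smul_zero, add_zero, sub_zero, Δ, φ]
    rw [Real.log_mul (inv_pos.2 (mul_pos (hpos _) (hpos _))).ne'
      (mul_pos (hpos _) (hpos _)).ne', Real.log_inv, Real.log_mul (hpos _).ne' (hpos _).ne',
      Real.log_mul (hpos _).ne' (hpos _).ne']
    linear_combination (-Real.pi) * hq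
  let u : ℕ → ∀ i, (Fin (ni i) → ℝ) → ℝ := fun j i z => v i ((√2 : ℝ)⁻¹ ^ j • z) ^ 2 ^ j
  have hu : ∀ j, IsOptimal C p Q 𝒬 (u j) := hv.rescale hveven hQ hp h𝒬
  have hule : ∀ j i z, u j i z ≤ 1 := fun j i z =>
    pow_le_one₀ (hv.admissible.nonneg i _)
      ((hv.le_apply_zero hveven hQ hp h𝒬 i _).trans (hv0 i).le)
  have hu0 : ∀ j i, u j i 0 = 1 := fun j i => by simp only [u, smul_zero, hv0, one_pow]
  let B : ∀ i, Matrix (Fin (ni i)) (Fin (ni i)) ℝ := fun i => Q i - (2 * Real.pi)⁻¹ • S i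
  have hlim : ∀ i z, Tendsto (fun j => u j i z) atTop (𝓝 (gaussFn (B i) z)) := by
    intro i z
    have hr0 : (0 : ℝ) < (√2 : ℝ)⁻¹ := by positivity
    have hr1 : (√2 : ℝ)⁻¹ < 1 := inv_lt_one_of_one_lt₀ (by
      rw [Real.lt_sqrt (by norm_num)]
      norm_num)
    have ht : Tendsto (fun j : ℕ => (√2 : ℝ)⁻¹ ^ (j + 1)) atTop (𝓝[≠] 0) :=
      tendsto_nhdsWithin_iff.2 ⟨(tendsto_add_atTop_iff_nat 1).2
        (tendsto_pow_atTop_nhds_zero_of_lt_one hr0.le hr1),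
        Eventually.of_forall fun j => (pow_pos hr0 _).ne'⟩
    have h1 := ((hS i z).comp ht).div_const 2
    have h2 := (Real.continuous_exp.tendsto _).comp
      (h1.sub_const (Real.pi * quadForm (Q i) z))
    have hlimit : Real.exp (quadForm (S i) z / 2 - Real.pi * quadForm (Q i) z) =
        gaussFn (B i) z := by
      rw [gaussFn_eq]
      congr 1
      simp only [B, quadForm_sub_matrix]
      simp only [quadForm, smul_mulVec, smul_dotProduct, smul_eq_mul]
      field_simp
      ring
    rw [hlimit] at h2
    refine h2.congr fun j => ?_
    have hsq : ∀ j : ℕ, ((√2 : ℝ)⁻¹ ^ j) ^ 2 = (2 ^ j)⁻¹ := fun j => by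
      rw [← pow_mul, mul_comm, pow_mul, inv_sqrt_two_sq, one_div, inv_pow]
    simp only [u, hvexp, Function.comp_apply]
    rw [← Real.exp_nat_mul, quadForm_smul, hsq, hsq, smul_smul, ← pow_succ']
    congr 1
    simp only [Δ, φ]
    push_cast
    field_simp
    ring
  obtain ⟨c, hc, hcu⟩ := exists_mul_integral_le (C := C) hQ hp h𝒬
    (blSup_pos (C := C) (Q := Q) (𝒬 := 𝒬) hQ hp)
  have hmass : ∀ j i, ∫ z, u j i z ∈ Set.Icc 0 (c i)⁻¹ := fun j i => by
    refine ⟨((hu j).admissible i).integral_pos.le, ?_⟩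
    have h := hcu _ (hu j).admissible (hu j).le_blForm i
    rw [hu0] at h
    rwa [← one_div, le_div_iff₀' (hc i)]
  obtain ⟨I, -, σ, hσ, hI⟩ := (isCompact_univ_pi fun i =>
    isCompact_Icc (a := 0) (b := (c i)⁻¹)).tendsto_subseq
    (x := fun (j : ℕ) (i : Fin m) => ∫ z, u j i z) fun j i _ => hmass j i
  have hIi : ∀ i, Tendsto (fun j => ∫ z, u (σ j) i z) atTop (𝓝 (I i)) := tendsto_pi_nhds.1 hI
  have hlimσ : ∀ i z, Tendsto (fun j => u (σ j) i z) atTop (𝓝 (gaussFn (B i) z)) :=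
    fun i z => (hlim i z).comp hσ.tendsto_atTop
  have hBint : ∀ i, ∫⁻ z, ENNReal.ofReal (gaussFn (B i) z) ≤ ENNReal.ofReal (I i) := fun i =>
    lintegral_ofReal_le_of_tendsto (fun j => ((hu (σ j)).admissible i).continuous) (hlimσ i)
      (fun j => ((hu (σ j)).admissible i).ofReal_integral.ge)
      ((ENNReal.continuous_ofReal.tendsto _).comp (hIi i))
  have hBi : ∀ i, Integrable (gaussFn (B i)) := fun i => by
    refine ⟨(continuous_gaussFn _).aestronglyMeasurable, ?_⟩
    rw [hasFiniteIntegral_iff_ofReal (Eventually.of_forall fun z => (gaussFn_pos _ _).le)]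
    exact (hBint i).trans_lt ENNReal.ofReal_lt_top
  have hSpsd : ∀ i, ((2 * Real.pi)⁻¹ • S i).PosSemidef := fun i =>
    (posSemidef_of_quadForm_nonneg (hSsymm i) (hSnn i)).smul (by positivity)
  have hBpsd : ∀ i, (B i).PosSemidef := fun i => by
    refine posSemidef_of_quadForm_nonneg ?_ fun w => ?_
    · have hQs : (Q i).IsSymm := by
        have := (hQ i).isHermitian
        rwa [Matrix.IsHermitian, conjTranspose_eq_transpose_of_trivial] at this
      exact hQs.sub ((hSsymm i).smul _)
    · have h : gaussFn (B i) w ≤ 1 := le_of_tendsto' (hlim i w) fun j => hule j i w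
      rw [gaussFn_eq, Real.exp_le_one_iff, neg_nonpos] at h
      exact nonneg_of_mul_nonneg_right h Real.pi_pos
  have hB : ∀ i, (B i).PosDef ∧ (Q i - B i).PosSemidef := fun i =>
    ⟨(hBpsd i).posDef_of_integrable_gaussFn (hBi i), by
      simpa only [B, sub_sub_cancel] using hSpsd i⟩
  have hadm : Admissible Q fun i => gaussFn (B i) := admissible_gaussFn hB
  refine ⟨B, hB, hadm, ?_⟩
  have hI0 : ∀ i, ∫ z, gaussFn (B i) z ≤ I i := fun i => by
    have h := hBint i
    rw [← (hadm i).ofReal_integral] at h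
    exact ((ENNReal.ofReal_le_ofReal_iff'.1 h).resolve_right
      (not_le.2 (hadm i).integral_pos))
  have hN : Tendsto (fun j => blSup C p Q 𝒬 * ENNReal.ofReal (massProd p (u (σ j)))) atTop
      (𝓝 (blSup C p Q 𝒬 * ENNReal.ofReal (∏ i, I i ^ p i))) :=
    ENNReal.Tendsto.const_mul ((ENNReal.continuous_ofReal.tendsto _).comp
      (tendsto_finsetProd _ fun i _ => (hIi i).rpow_const (Or.inr (hp i).le)))
      (Or.inr (blSup_lt_top hQ hp h𝒬).ne)
  have hJ : Tendsto (fun j => blForm C p 𝒬 (u (σ j))) atTop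
      (𝓝 (blForm C p 𝒬 fun i => gaussFn (B i))) :=
    tendsto_blForm hp h𝒬 (b := fun _ => 1) (fun j i => ((hu (σ j)).admissible i).continuous)
      (fun j => (hu (σ j)).admissible.nonneg) (fun j => hule (σ j)) hlimσ
  refine le_trans ?_ (le_of_tendsto_of_tendsto' hN hJ fun j => (hu (σ j)).le_blForm)
  refine mul_le_mul_right (ENNReal.ofReal_le_ofReal (Finset.prod_le_prod
    (fun i _ => Real.rpow_nonneg (hadm i).integral_pos.le _) fun i _ =>
    Real.rpow_le_rpow (hadm i).integral_pos.le (hI0 i) (hp i).le)) _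

end GaussianOptimal

/-! ### The regularized Brascamp–Lieb inequality -/

section Inequality

variable {n m : ℕ} {ni : Fin m → ℕ} {C : ∀ i, Matrix (Fin (ni i)) (Fin n) ℝ} {p : Fin m → ℝ}
  {Q B : ∀ i, Matrix (Fin (ni i)) (Fin (ni i)) ℝ} {𝒬 : Matrix (Fin n) (Fin n) ℝ}
  {f : ∀ i, (Fin (ni i) → ℝ) → ℝ}

theorem quadForm_add_sum (x : Fin n → ℝ) :
    quadForm (𝒬 + ∑ i, p i • ((C i)ᵀ * B i * C i)) x =
      quadForm 𝒬 x + ∑ i, p i * quadForm (B i) ((C i).mulVec x) := by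
  simp only [quadForm, add_mulVec, add_dotProduct, sum_mulVec, sum_dotProduct, smul_mulVec,
    smul_dotProduct, smul_eq_mul]
  congr 1
  refine Finset.sum_congr rfl fun i _ => ?_
  rw [← mulVec_mulVec, ← mulVec_mulVec, mulVec_transpose, ← dotProduct_mulVec]

theorem blIntegrand_gaussFn (x : Fin n → ℝ) :
    blIntegrand C p 𝒬 (fun i => gaussFn (B i)) x =
      gaussFn (𝒬 + ∑ i, p i • ((C i)ᵀ * B i * C i)) x := by
  simp only [blIntegrand, gaussFn_eq, quadForm_add_sum, ← Real.exp_mul, ← Real.exp_sum,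
    ← Real.exp_add]
  congr 1
  rw [mul_add, neg_add, Finset.mul_sum, ← Finset.sum_neg_distrib]
  congr 1
  exact Finset.sum_congr rfl fun i _ => by ring

theorem posDef_add_sum (h𝒬 : 𝒬.PosSemidef) (hp : ∀ i, 0 < p i) (hB : ∀ i, (B i).PosDef)
    (hker : ∀ x : Fin n → ℝ, (∀ i, (C i).mulVec x = 0) → x = 0) :
    (𝒬 + ∑ i, p i • ((C i)ᵀ * B i * C i)).PosDef := by
  refine PosDef.of_dotProduct_mulVec_pos ?_ fun x hx => ?_
  · refine h𝒬.isHermitian.add (posSemidef_sum _ fun i _ => ?_).isHermitian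
    have h := (hB i).posSemidef.conjTranspose_mul_mul_same (C i)
    rw [conjTranspose_eq_transpose_of_trivial] at h
    exact h.smul (hp i).le
  · rw [star_trivial, dotProduct_comm]
    change 0 < quadForm _ x
    rw [quadForm_add_sum]
    obtain ⟨i, hi⟩ : ∃ i, (C i).mulVec x ≠ 0 := by
      by_contra! h
      exact hx (hker x h)
    refine add_pos_of_nonneg_of_pos (h𝒬.quadForm_nonneg x) (Finset.sum_pos'
      (fun i _ => mul_nonneg (hp i).le ((hB i).posSemidef.quadForm_nonneg _))
      ⟨i, Finset.mem_univ i, mul_pos (hp i) ?_⟩)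
    have h := (hB i).dotProduct_mulVec_pos hi
    rwa [star_trivial, dotProduct_comm] at h

/-- The Brascamp–Lieb functional on centered Gaussians. -/
theorem blForm_gaussFn (h𝒬 : 𝒬.PosSemidef) (hp : ∀ i, 0 < p i) (hB : ∀ i, (B i).PosDef)
    (hker : ∀ x : Fin n → ℝ, (∀ i, (C i).mulVec x = 0) → x = 0) :
    blForm C p 𝒬 (fun i => gaussFn (B i)) =
      ((∏ i, ENNReal.ofReal ((B i).det) ^ p i) /
        ENNReal.ofReal ((𝒬 + ∑ i, p i • ((C i)ᵀ * B i * C i)).det)) ^ ((2 : ℝ)⁻¹) *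
      ENNReal.ofReal (massProd p fun i => gaussFn (B i)) := by
  have hM := posDef_add_sum (p := p) h𝒬 hp hB hker
  set M := 𝒬 + ∑ i, p i • ((C i)ᵀ * B i * C i)
  have hdet : ∀ i, 0 < (B i).det := fun i => (hB i).det_pos
  have hprod : 0 < ∏ i, (B i).det ^ p i :=
    Finset.prod_pos fun i _ => Real.rpow_pos_of_pos (hdet i) _
  have hmass : massProd p (fun i => gaussFn (B i)) = ((∏ i, (B i).det ^ p i) ^ (2 : ℝ)⁻¹)⁻¹ := by
    rw [massProd, ← Real.finsetProd_rpow _ _ fun i _ => (Real.rpow_pos_of_pos (hdet i) _).le,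
      ← Finset.prod_inv_distrib]
    refine Finset.prod_congr rfl fun i _ => ?_
    rw [(hB i).integral_gaussFn, Real.inv_rpow (Real.rpow_pos_of_pos (hdet i) _).le,
      ← Real.rpow_mul (hdet i).le, ← Real.rpow_mul (hdet i).le, mul_comm]
  have hlhs : blForm C p 𝒬 (fun i => gaussFn (B i)) = ENNReal.ofReal ((M.det ^ (2 : ℝ)⁻¹)⁻¹) := by
    simp only [blForm, blIntegrand_gaussFn]
    rw [← hM.integral_gaussFn, ofReal_integral_eq_lintegral_ofReal hM.integrable_gaussFn
      (Eventually.of_forall fun x => (gaussFn_pos _ _).le)]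
  have hrhs : ∏ i, ENNReal.ofReal ((B i).det) ^ p i =
      ENNReal.ofReal (∏ i, (B i).det ^ p i) := by
    rw [ENNReal.ofReal_prod_of_nonneg fun i _ => (Real.rpow_pos_of_pos (hdet i) _).le]
    exact Finset.prod_congr rfl fun i _ => ENNReal.ofReal_rpow_of_pos (hdet i)
  rw [hlhs, hrhs, hmass, ← ENNReal.ofReal_div_of_pos hM.det_pos,
    ENNReal.ofReal_rpow_of_pos (div_pos hprod hM.det_pos),
    ← ENNReal.ofReal_mul (Real.rpow_nonneg (div_pos hprod hM.det_pos).le _),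
    Real.div_rpow hprod.le hM.det_pos.le]
  congr 1
  have := Real.rpow_pos_of_pos hprod (2 : ℝ)⁻¹
  have := Real.rpow_pos_of_pos hM.det_pos (2 : ℝ)⁻¹
  field_simp

theorem blForm_gaussFn_le (h𝒬 : 𝒬.PosSemidef) (hp : ∀ i, 0 < p i)
    (hker : ∀ x : Fin n → ℝ, (∀ i, (C i).mulVec x = 0) → x = 0)
    (hB : ∀ i, (B i).PosDef ∧ (Q i - B i).PosSemidef) :
    blForm C p 𝒬 (fun i => gaussFn (B i)) ≤
      BLconstQ C p Q 𝒬 * ENNReal.ofReal (massProd p fun i => gaussFn (B i)) := by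
  rw [blForm_gaussFn h𝒬 hp (fun i => (hB i).1) hker]
  refine mul_le_mul_left ?_ _
  rw [BLconstQ]
  exact le_iSup₂_of_le B hB le_rfl

theorem quadForm_add_smul_one (A : Matrix (Fin k) (Fin k) ℝ) (ε : ℝ) (x : Fin k → ℝ) :
    quadForm (A + ε • (1 : Matrix (Fin k) (Fin k) ℝ)) x = quadForm A x + ε * (x ⬝ᵥ x) := by
  simp only [quadForm, add_mulVec, add_dotProduct, smul_mulVec, one_mulVec, smul_dotProduct,
    smul_eq_mul]

/-- Enlarging `𝒬` decreases the best constant below the Gaussian constant. -/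
theorem blSup_add_smul_one_le (h𝒬 : 𝒬.PosSemidef) (hQ : ∀ i, (Q i).PosDef) (hp : ∀ i, 0 < p i)
    (hC : ∀ i, Function.Surjective (C i).mulVec)
    (hker : ∀ x : Fin n → ℝ, (∀ i, (C i).mulVec x = 0) → x = 0) {ε : ℝ} (hε : 0 < ε) :
    blSup C p Q (𝒬 + ε • (1 : Matrix (Fin n) (Fin n) ℝ)) ≤ BLconstQ C p Q 𝒬 := by
  obtain ⟨B, hB, hopt⟩ := exists_isOptimal_gaussFn (C := C) hQ hp
    (PosDef.posSemidef_add h𝒬 (PosDef.one.smul hε)) hC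
  have hle : blForm C p (𝒬 + ε • (1 : Matrix (Fin n) (Fin n) ℝ)) (fun i => gaussFn (B i)) ≤
      blForm C p 𝒬 (fun i => gaussFn (B i)) := by
    refine lintegral_mono fun x => ENNReal.ofReal_le_ofReal (mul_le_mul_of_nonneg_right ?_
      (Finset.prod_nonneg fun i _ => Real.rpow_nonneg (gaussFn_pos _ _).le _))
    rw [gaussFn_eq, gaussFn_eq, Real.exp_le_exp, quadForm_add_smul_one]
    have hx : 0 ≤ x ⬝ᵥ x := Finset.sum_nonneg fun i _ => mul_self_nonneg _
    have := mul_nonneg Real.pi_pos.le (mul_nonneg hε.le hx)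
    linarith
  exact (ENNReal.mul_le_mul_iff_left (ENNReal.ofReal_pos.2 (hopt.admissible.massProd_pos p)).ne'
    ENNReal.ofReal_ne_top).1 (hopt.le_blForm.trans (hle.trans (blForm_gaussFn_le h𝒬 hp hker hB)))

/-- The generalized regularized Brascamp–Lieb inequality: centered Gaussians exhaust the best
constant. -/
theorem Admissible.blForm_le_BLconstQ (hf : Admissible Q f) (h𝒬 : 𝒬.PosSemidef)
    (hQ : ∀ i, (Q i).PosDef) (hp : ∀ i, 0 < p i) (hC : ∀ i, Function.Surjective (C i).mulVec)
    (hker : ∀ x : Fin n → ℝ, (∀ i, (C i).mulVec x = 0) → x = 0) :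
    blForm C p 𝒬 f ≤ BLconstQ C p Q 𝒬 * ENNReal.ofReal (massProd p f) := by
  refine lintegral_ofReal_le_of_tendsto (u := fun j : ℕ => blIntegrand C p
    (𝒬 + (1 / ((j : ℝ) + 1)) • (1 : Matrix (Fin n) (Fin n) ℝ)) f)
    (fun j => continuous_blIntegrand hp fun i => (hf i).continuous) (fun x => ?_)
    (fun j => ?_) tendsto_const_nhds
  · refine Tendsto.mul_const _ ?_
    simp only [gaussFn_eq, quadForm_add_smul_one]
    have h : Continuous fun ε : ℝ =>
        Real.exp (-(Real.pi * (quadForm 𝒬 x + ε * (x ⬝ᵥ x)))) := by fun_prop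
    have h' := (h.tendsto 0).comp tendsto_one_div_add_atTop_nhds_zero_nat
    simpa only [zero_mul, add_zero, Function.comp_def] using h'
  · exact hf.blForm_le.trans (mul_le_mul_left
      (blSup_add_smul_one_le h𝒬 hQ hp hC hker (by positivity)) _)

theorem BLconstQ_pos (h𝒬 : 𝒬.PosSemidef) (hQ : ∀ i, (Q i).PosDef) (hp : ∀ i, 0 < p i)
    (hker : ∀ x : Fin n → ℝ, (∀ i, (C i).mulVec x = 0) → x = 0) : 0 < BLconstQ C p Q 𝒬 := by
  have hB : ∀ i, (Q i).PosDef ∧ (Q i - Q i).PosSemidef := fun i =>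
    ⟨hQ i, by simpa using Matrix.PosSemidef.zero⟩
  have h := ((admissible_gaussFn hB).blForm_pos hp).trans_le
    (blForm_gaussFn_le (C := C) (𝒬 := 𝒬) h𝒬 hp hker hB)
  exact pos_iff_ne_zero.2 fun h0 => by simp [h0] at h

theorem Admissible.ofReal_massProd (hf : Admissible Q f) :
    ENNReal.ofReal (massProd p f) = ∏ i, ENNReal.ofReal (∫ y, f i y) ^ p i := by
  rw [massProd, ENNReal.ofReal_prod_of_nonneg fun i _ =>
    (Real.rpow_pos_of_pos (hf i).integral_pos _).le]
  exact Finset.prod_congr rfl fun i _ => (ENNReal.ofReal_rpow_of_pos (hf i).integral_pos).symm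

theorem IsExtremizer.admissible (hf : IsExtremizer C p Q 𝒬 f) : Admissible Q f :=
  fun i => .of_moreLogConvex (hf.2.2.1 i) (hf.1 i) (hf.2.1 i)

theorem IsExtremizer.blForm_eq (hf : IsExtremizer C p Q 𝒬 f) :
    blForm C p 𝒬 f = BLconstQ C p Q 𝒬 * ENNReal.ofReal (massProd p f) := by
  rw [hf.admissible.ofReal_massProd]
  exact hf.2.2.2

theorem Admissible.isExtremizer (hf : Admissible Q f)
    (h : blForm C p 𝒬 f = BLconstQ C p Q 𝒬 * ENNReal.ofReal (massProd p f)) :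
    IsExtremizer C p Q 𝒬 f := by
  refine ⟨fun i => (hf i).integrable, fun i h0 => ?_, fun i => (hf i).moreLogConvex, ?_⟩
  · have hpos := (hf i).integral_pos
    rw [integral_congr_ae h0] at hpos
    simp at hpos
  · rw [hf.ofReal_massProd] at h
    exact h

end Inequality

/-- The class of extremizers of a generalized regularized Brascamp–Lieb datum is
closed under the rescaled convolution `Conv`. -/
theorem isExtremizer_conv
    {n m : ℕ} (hm : 1 ≤ m) {ni : Fin m → ℕ}
    (C : ∀ i, Matrix (Fin (ni i)) (Fin n) ℝ)
    (hCsurj : ∀ i, Function.Surjective (C i).mulVec)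
    (hker : ∀ x : Fin n → ℝ, (∀ i, (C i).mulVec x = 0) → x = 0)
    (p : Fin m → ℝ) (hp : ∀ i, 0 < p i)
    (Q : ∀ i, Matrix (Fin (ni i)) (Fin (ni i)) ℝ) (hQ : ∀ i, (Q i).PosDef)
    (𝒬 : Matrix (Fin n) (Fin n) ℝ) (h𝒬 : 𝒬.PosSemidef)
    (hBL : BLconstQ C p Q 𝒬 < ⊤)
    (f g : ∀ i, (Fin (ni i) → ℝ) → ℝ)
    (hf : IsExtremizer C p Q 𝒬 f) (hg : IsExtremizer C p Q 𝒬 g) :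
    IsExtremizer C p Q 𝒬 (fun i => Conv (f i) (g i)) ∧
      ∀ i, MoreLogConvex (Conv (f i) (g i)) (Q i) := by
  have haf := hf.admissible
  have hag := hg.admissible
  have hconv := haf.conv hag hQ
  have hBL0 : BLconstQ C p Q 𝒬 ≠ 0 := (BLconstQ_pos h𝒬 hQ hp hker).ne'
  have hineq : ∀ u, Admissible Q u →
      blForm C p 𝒬 u ≤ BLconstQ C p Q 𝒬 * ENNReal.ofReal (massProd p u) :=
    fun u hu => hu.blForm_le_BLconstQ h𝒬 hQ hp hCsurj hker
  have hext : IsExtremizer C p Q 𝒬 fun i => Conv (f i) (g i) := by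
    refine hconv.isExtremizer (le_antisymm (hineq _ hconv) ?_)
    have h := haf.blForm_mul_blForm_le hag hQ hp hineq
    rw [hf.blForm_eq, hg.blForm_eq, mul_mul_mul_comm, ← ENNReal.ofReal_mul
      (haf.massProd_pos p).le, ← haf.massProd_conv hag hQ, mul_assoc] at h
    exact (ENNReal.mul_le_mul_iff_right hBL0 hBL.ne).1 h
  exact ⟨hext, hext.2.2.1⟩
end
end

section
/- Let (C,p,Q,𝒬) be a generalized Brascamp–Lieb datum with 𝒬 symmetric positive semidefinite and BL(C,p,Q,𝒬) < +∞. Suppose the tuples (A_j)_{j=1}^m and (A'_j)_{j=1}^m of symmetric matrices with 0 < A_j ≤ Q_j and 0 < A'_j ≤ Q_j both attain the supremum defining BL(C,p,Q,𝒬). Then the tuples (2(A_j^{-1} + A_j'^{-1})^{-1})_{j=1}^m and ((A_j + A'_j)/2)_{j=1}^m also consist of symmetric matrices between 0 and Q_j and attain this supremum. -/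
open MeasureTheory Matrix
open scoped ENNReal

noncomputable section

/-- The value of the Gaussian Brascamp–Lieb functional at a tuple `B`. -/
def BLval {n m : ℕ} {ni : Fin m → ℕ} (C : ∀ i, Matrix (Fin (ni i)) (Fin n) ℝ)
    (p : Fin m → ℝ) (𝒬 : Matrix (Fin n) (Fin n) ℝ)
    (B : ∀ i, Matrix (Fin (ni i)) (Fin (ni i)) ℝ) : ℝ≥0∞ :=
  ((∏ i, ENNReal.ofReal ((B i).det) ^ p i) /
      ENNReal.ofReal ((𝒬 + ∑ i, p i • ((C i)ᵀ * B i * C i)).det)) ^ ((2 : ℝ)⁻¹)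

namespace Matrix

variable {ι : Type*} [Fintype ι]

lemma IsHermitian.mulVec_dotProduct_comm {A : Matrix ι ι ℝ} (hA : A.IsHermitian) (x y : ι → ℝ) :
    (A *ᵥ x) ⬝ᵥ y = x ⬝ᵥ (A *ᵥ y) := by
  have hT : Aᵀ = A := by simpa [IsHermitian] using hA
  rw [dotProduct_mulVec, ← mulVec_transpose, hT]

variable [DecidableEq ι]

/-- Adding a positive semidefinite matrix to the identity does not decrease the determinant. -/
lemma PosSemidef.one_le_det_one_add {S : Matrix ι ι ℝ} (hS : S.PosSemidef) :
    1 ≤ (1 + S).det := by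
  have hU : (hS.1.eigenvectorUnitary : Matrix ι ι ℝ) *
      star (hS.1.eigenvectorUnitary : Matrix ι ι ℝ) = 1 := Unitary.coe_mul_star_self hS.1.eigenvectorUnitary
  have hdet : (1 + S).det = ∏ i, (1 + hS.1.eigenvalues i) := by
    have hdiag : (1 + S) = hS.1.eigenvectorUnitary *
        (diagonal fun i => 1 + hS.1.eigenvalues i) *
        star (hS.1.eigenvectorUnitary : Matrix ι ι ℝ) := by
      have h := hS.1.spectral_theorem
      rw [Unitary.conjStarAlgAut_apply] at h
      have hsum : (diagonal fun i => 1 + hS.1.eigenvalues i) =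
          1 + diagonal ((RCLike.ofReal : ℝ → ℝ) ∘ hS.1.eigenvalues) := by
        rw [← diagonal_one, diagonal_add]
        rfl
      rw [hsum, mul_add, add_mul, mul_one, hU, ← h]
    rw [hdiag, det_mul_right_comm, hU, one_mul, det_diagonal]
  rw [hdet]
  exact Finset.one_le_prod fun i _ => le_add_of_nonneg_right (hS.eigenvalues_nonneg i)

open scoped MatrixOrder Matrix.Norms.L2Operator in
/-- The determinant is monotone on positive definite matrices. -/
lemma PosDef.det_le_det {X Y : Matrix ι ι ℝ} (hX : X.PosDef) (hXY : (Y - X).PosSemidef) :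
    X.det ≤ Y.det := by
  obtain ⟨E, hE⟩ : ∃ E : Matrix ι ι ℝ, Y - X = Eᴴ * E :=
    CStarAlgebra.nonneg_iff_eq_star_mul_self.mp hXY.nonneg
  have hY : Y = X * (1 + X⁻¹ * Eᴴ * E) := by
    rw [mul_add, mul_one, mul_assoc, ← hE, mul_nonsing_inv_cancel_left _ _
      ((isUnit_iff_isUnit_det _).mp hX.isUnit)]
    abel
  have hS : 1 ≤ (1 + E * (X⁻¹ * Eᴴ)).det := by
    rw [← mul_assoc]
    exact (hX.inv.posSemidef.mul_mul_conjTranspose_same E).one_le_det_one_add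
  rw [hY, det_mul, det_one_add_mul_comm]
  exact le_mul_of_one_le_right hX.det_pos.le hS

/-- The harmonic mean of two positive definite matrices. -/
abbrev harmonicMean (A B : Matrix ι ι ℝ) : Matrix ι ι ℝ := (2 : ℝ) • (A⁻¹ + B⁻¹)⁻¹

lemma PosDef.harmonicMean {A B : Matrix ι ι ℝ} (hA : A.PosDef) (hB : B.PosDef) :
    (harmonicMean A B).PosDef :=
  (hA.inv.add hB.inv).inv.smul two_pos

lemma PosDef.mulVec_inv_add_inv {A B : Matrix ι ι ℝ} (hA : A.PosDef) (hB : B.PosDef)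
    (x : ι → ℝ) :
    A⁻¹ *ᵥ ((A⁻¹ + B⁻¹)⁻¹ *ᵥ x) + B⁻¹ *ᵥ ((A⁻¹ + B⁻¹)⁻¹ *ᵥ x) = x := by
  rw [← add_mulVec, mulVec_mulVec, mul_nonsing_inv _
    ((isUnit_iff_isUnit_det _).mp (hA.inv.add hB.inv).isUnit), one_mulVec]

/-- Variational upper bound for the quadratic form of the harmonic mean. -/
lemma PosDef.harmonicMean_dotProduct_le {A B : Matrix ι ι ℝ} (hA : A.PosDef) (hB : B.PosDef)
    (y z : ι → ℝ) :
    (y + z) ⬝ᵥ (Matrix.harmonicMean A B *ᵥ (y + z)) ≤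
      2 * (y ⬝ᵥ (A *ᵥ y) + z ⬝ᵥ (B *ᵥ z)) := by
  have hx := hA.mulVec_inv_add_inv hB (y + z)
  rw [smul_mulVec, dotProduct_smul, smul_eq_mul]
  generalize (A⁻¹ + B⁻¹)⁻¹ *ᵥ (y + z) = u at hx ⊢
  obtain ⟨d, rfl⟩ : ∃ d, y = A⁻¹ *ᵥ u + d := ⟨y - A⁻¹ *ᵥ u, by abel⟩
  obtain rfl : z = B⁻¹ *ᵥ u - d := by
    have h : z = (A⁻¹ *ᵥ u + B⁻¹ *ᵥ u) - (A⁻¹ *ᵥ u + d) := by rw [hx]; abel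
    rw [h]; abel
  have hAu : A *ᵥ (A⁻¹ *ᵥ u) = u := by
    rw [mulVec_mulVec, mul_nonsing_inv _ ((isUnit_iff_isUnit_det _).mp hA.isUnit), one_mulVec]
  have hBu : B *ᵥ (B⁻¹ *ᵥ u) = u := by
    rw [mulVec_mulVec, mul_nonsing_inv _ ((isUnit_iff_isUnit_det _).mp hB.isUnit), one_mulVec]
  have hAd : (A⁻¹ *ᵥ u) ⬝ᵥ (A *ᵥ d) = u ⬝ᵥ d := by
    rw [← hA.1.mulVec_dotProduct_comm, hAu]
  have hBd : (B⁻¹ *ᵥ u) ⬝ᵥ (B *ᵥ d) = u ⬝ᵥ d := by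
    rw [← hB.1.mulVec_dotProduct_comm, hBu]
  have hdA := hA.posSemidef.dotProduct_mulVec_nonneg d
  have hdB := hB.posSemidef.dotProduct_mulVec_nonneg d
  simp only [star_trivial] at hdA hdB
  simp only [mulVec_add, mulVec_sub, hAu, hBu, add_dotProduct, sub_dotProduct, dotProduct_add,
    dotProduct_sub, hAd, hBd, dotProduct_comm d u]
  linarith

/-- The variational bound for the harmonic mean is attained. -/
lemma PosDef.exists_harmonicMean_dotProduct_eq {A B : Matrix ι ι ℝ} (hA : A.PosDef)
    (hB : B.PosDef) (x : ι → ℝ) :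
    ∃ y z, y + z = x ∧ x ⬝ᵥ (Matrix.harmonicMean A B *ᵥ x) =
      2 * (y ⬝ᵥ (A *ᵥ y) + z ⬝ᵥ (B *ᵥ z)) := by
  have hx := hA.mulVec_inv_add_inv hB x
  refine ⟨_, _, hx, ?_⟩
  rw [smul_mulVec, dotProduct_smul, smul_eq_mul]
  set u := (A⁻¹ + B⁻¹)⁻¹ *ᵥ x
  rw [mulVec_mulVec u A, mulVec_mulVec u B,
    mul_nonsing_inv _ ((isUnit_iff_isUnit_det _).mp hA.isUnit),
    mul_nonsing_inv _ ((isUnit_iff_isUnit_det _).mp hB.isUnit), one_mulVec, ← add_dotProduct, hx]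

/-- The harmonic mean is at most the arithmetic mean. -/
lemma PosDef.posSemidef_arithmeticMean_sub_harmonicMean {A B : Matrix ι ι ℝ} (hA : A.PosDef)
    (hB : B.PosDef) : ((2 : ℝ)⁻¹ • (A + B) - Matrix.harmonicMean A B).PosSemidef := by
  refine .of_dotProduct_mulVec_nonneg
    (((hA.add hB).smul (by norm_num : (0 : ℝ) < 2⁻¹)).1.sub (hA.harmonicMean hB).1) fun x => ?_
  have h := hA.harmonicMean_dotProduct_le hB ((2 : ℝ)⁻¹ • x) ((2 : ℝ)⁻¹ • x)
  rw [← add_smul, show (2 : ℝ)⁻¹ + 2⁻¹ = 1 by norm_num, one_smul] at h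
  simp only [mulVec_smul, dotProduct_smul, smul_dotProduct, smul_eq_mul] at h
  rw [star_trivial, sub_mulVec, dotProduct_sub, smul_mulVec (2 : ℝ)⁻¹, add_mulVec,
    dotProduct_smul, dotProduct_add, smul_eq_mul]
  linarith

/-- The arithmetic and the harmonic mean of two matrices have the same product of determinants
as the matrices themselves. -/
lemma PosDef.det_arithmeticMean_mul_det_harmonicMean {A B : Matrix ι ι ℝ} (hA : A.PosDef)
    (hB : B.PosDef) :
    ((2 : ℝ)⁻¹ • (A + B)).det * (Matrix.harmonicMean A B).det = A.det * B.det := by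
  have hAu := (isUnit_iff_isUnit_det _).mp hA.isUnit
  have hBu := (isUnit_iff_isUnit_det _).mp hB.isUnit
  have hinv : A⁻¹ + B⁻¹ = A⁻¹ * (A + B) * B⁻¹ := by
    rw [mul_add, nonsing_inv_mul _ hAu, add_mul, one_mul, mul_assoc, mul_nonsing_inv _ hBu,
      mul_one, add_comm]
  rw [Matrix.harmonicMean, det_smul, det_smul, hinv, det_nonsing_inv, det_mul, det_mul,
    det_nonsing_inv, det_nonsing_inv]
  simp only [Ring.inverse_eq_inv', inv_pow]
  have h1 := hA.det_pos.ne'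
  have h2 := hB.det_pos.ne'
  have h3 := (hA.add hB).det_pos.ne'
  field_simp

end Matrix

section BrascampLieb

variable {n m : ℕ} {ni : Fin m → ℕ} (C : ∀ i, Matrix (Fin (ni i)) (Fin n) ℝ) (p : Fin m → ℝ)
  (𝒬 : Matrix (Fin n) (Fin n) ℝ)

/-- The matrix whose determinant is the denominator of the Brascamp–Lieb functional. -/
def BLmatrix (B : ∀ i, Matrix (Fin (ni i)) (Fin (ni i)) ℝ) : Matrix (Fin n) (Fin n) ℝ :=
  𝒬 + ∑ i, p i • ((C i)ᵀ * B i * C i)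

/-- The square of the Brascamp–Lieb functional, as a real number. -/
def BLratio (B : ∀ i, Matrix (Fin (ni i)) (Fin (ni i)) ℝ) : ℝ :=
  (∏ i, (B i).det ^ p i) / (BLmatrix C p 𝒬 B).det

lemma BLmatrix_dotProduct (B : ∀ i, Matrix (Fin (ni i)) (Fin (ni i)) ℝ) (x : Fin n → ℝ) :
    x ⬝ᵥ (BLmatrix C p 𝒬 B *ᵥ x) =
      x ⬝ᵥ (𝒬 *ᵥ x) + ∑ i, p i * ((C i *ᵥ x) ⬝ᵥ (B i *ᵥ (C i *ᵥ x))) := by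
  rw [BLmatrix, add_mulVec, dotProduct_add, sum_mulVec, dotProduct_sum]
  congr 1
  refine Finset.sum_congr rfl fun i _ => ?_
  rw [smul_mulVec, dotProduct_smul, smul_eq_mul, ← mulVec_mulVec, ← mulVec_mulVec,
    dotProduct_mulVec, vecMul_transpose]

variable {C p 𝒬}

lemma BLmatrix_posDef (hker : ∀ x : Fin n → ℝ, (∀ i, (C i).mulVec x = 0) → x = 0)
    (hp : ∀ i, 0 < p i) (h𝒬 : 𝒬.PosSemidef) {B : ∀ i, Matrix (Fin (ni i)) (Fin (ni i)) ℝ}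
    (hB : ∀ i, (B i).PosDef) : (BLmatrix C p 𝒬 B).PosDef := by
  have hterm (i : Fin m) : (p i • ((C i)ᵀ * B i * C i)).PosSemidef :=
    ((hB i).posSemidef.conjTranspose_mul_mul_same (C i)).smul (hp i).le
  refine .of_dotProduct_mulVec_pos
    (h𝒬.add (posSemidef_sum Finset.univ fun i _ => hterm i)).1 fun x hx => ?_
  rw [star_trivial, BLmatrix_dotProduct]
  have h0 : 0 ≤ x ⬝ᵥ (𝒬 *ᵥ x) := by simpa using h𝒬.dotProduct_mulVec_nonneg x
  obtain ⟨i, hi⟩ : ∃ i, C i *ᵥ x ≠ 0 := by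
    by_contra! h
    exact hx (hker x h)
  refine add_pos_of_nonneg_of_pos h0 (Finset.sum_pos' (fun j _ => ?_) ⟨i, Finset.mem_univ i, ?_⟩)
  · exact mul_nonneg (hp j).le
      (by simpa using (hB j).posSemidef.dotProduct_mulVec_nonneg (C j *ᵥ x))
  · exact mul_pos (hp i) (by simpa using (hB i).dotProduct_mulVec_pos hi)

lemma BLval_eq_ofReal {B : ∀ i, Matrix (Fin (ni i)) (Fin (ni i)) ℝ}
    (hB : ∀ i, (B i).PosDef) (hM : (BLmatrix C p 𝒬 B).PosDef) :
    BLval C p 𝒬 B = ENNReal.ofReal (BLratio C p 𝒬 B) ^ ((2 : ℝ)⁻¹) := by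
  rw [BLval, BLratio, ENNReal.ofReal_div_of_pos hM.det_pos,
    ENNReal.ofReal_prod_of_nonneg fun i _ => Real.rpow_nonneg (hB i).det_pos.le _]
  simp only [ENNReal.ofReal_rpow_of_pos (hB _).det_pos]
  rfl

lemma BLratio_pos {B : ∀ i, Matrix (Fin (ni i)) (Fin (ni i)) ℝ}
    (hB : ∀ i, (B i).PosDef) (hM : (BLmatrix C p 𝒬 B).PosDef) : 0 < BLratio C p 𝒬 B :=
  div_pos (Finset.prod_pos fun i _ => Real.rpow_pos_of_pos (hB i).det_pos _) hM.det_pos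

lemma BLmatrix_arithmeticMean (A A' : ∀ i, Matrix (Fin (ni i)) (Fin (ni i)) ℝ) :
    BLmatrix C p 𝒬 (fun i => (2 : ℝ)⁻¹ • (A i + A' i)) =
      (2 : ℝ)⁻¹ • (BLmatrix C p 𝒬 A + BLmatrix C p 𝒬 A') := by
  have hsum : ∑ i, p i • ((C i)ᵀ * ((2 : ℝ)⁻¹ • (A i + A' i)) * C i) =
      (2 : ℝ)⁻¹ • (∑ i, p i • ((C i)ᵀ * A i * C i) + ∑ i, p i • ((C i)ᵀ * A' i * C i)) := by
    rw [← Finset.sum_add_distrib, Finset.smul_sum]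
    refine Finset.sum_congr rfl fun i _ => ?_
    rw [Matrix.mul_smul, Matrix.smul_mul, Matrix.mul_add, Matrix.add_mul, ← smul_add, smul_comm]
  simp only [BLmatrix]
  rw [hsum]
  module

/-- The matrix of the harmonic means is at most the harmonic mean of the matrices. -/
lemma posSemidef_harmonicMean_BLmatrix_sub (hp : ∀ i, 0 < p i) (h𝒬 : 𝒬.PosSemidef)
    {A A' : ∀ i, Matrix (Fin (ni i)) (Fin (ni i)) ℝ} (hA : ∀ i, (A i).PosDef)
    (hA' : ∀ i, (A' i).PosDef) (hM : (BLmatrix C p 𝒬 A).PosDef)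
    (hM' : (BLmatrix C p 𝒬 A').PosDef)
    (hH : (BLmatrix C p 𝒬 fun i => harmonicMean (A i) (A' i)).PosDef) :
    (harmonicMean (BLmatrix C p 𝒬 A) (BLmatrix C p 𝒬 A') -
      BLmatrix C p 𝒬 fun i => harmonicMean (A i) (A' i)).PosSemidef := by
  refine .of_dotProduct_mulVec_nonneg ((hM.harmonicMean hM').1.sub hH.1) fun x => ?_
  obtain ⟨y, z, rfl, h⟩ := hM.exists_harmonicMean_dotProduct_eq hM' x
  rw [star_trivial, sub_mulVec, dotProduct_sub, h, sub_nonneg]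
  simp only [BLmatrix_dotProduct]
  have hq : (y + z) ⬝ᵥ (𝒬 *ᵥ (y + z)) ≤ 2 * (y ⬝ᵥ (𝒬 *ᵥ y) + z ⬝ᵥ (𝒬 *ᵥ z)) := by
    have hd := h𝒬.dotProduct_mulVec_nonneg (y - z)
    simp only [star_trivial, mulVec_sub, dotProduct_sub, sub_dotProduct] at hd
    simp only [mulVec_add, dotProduct_add, add_dotProduct]
    linarith
  have hs : ∑ i, p i * ((C i *ᵥ (y + z)) ⬝ᵥ
      (harmonicMean (A i) (A' i) *ᵥ (C i *ᵥ (y + z)))) ≤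
      2 * (∑ i, p i * ((C i *ᵥ y) ⬝ᵥ (A i *ᵥ (C i *ᵥ y))) +
        ∑ i, p i * ((C i *ᵥ z) ⬝ᵥ (A' i *ᵥ (C i *ᵥ z)))) := by
    rw [← Finset.sum_add_distrib, Finset.mul_sum]
    refine Finset.sum_le_sum fun i _ => ?_
    have hi := mul_le_mul_of_nonneg_left
      ((hA i).harmonicMean_dotProduct_le (hA' i) (C i *ᵥ y) (C i *ᵥ z)) (hp i).le
    rw [mulVec_add]
    linarith
  linarith

/-- The product of the values at two tuples is at most the product of the values at their
arithmetic and harmonic means. -/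
lemma BLratio_mul_le (hker : ∀ x : Fin n → ℝ, (∀ i, (C i).mulVec x = 0) → x = 0)
    (hp : ∀ i, 0 < p i) (h𝒬 : 𝒬.PosSemidef)
    {A A' : ∀ i, Matrix (Fin (ni i)) (Fin (ni i)) ℝ} (hA : ∀ i, (A i).PosDef)
    (hA' : ∀ i, (A' i).PosDef) :
    BLratio C p 𝒬 A * BLratio C p 𝒬 A' ≤
      BLratio C p 𝒬 (fun i => (2 : ℝ)⁻¹ • (A i + A' i)) *
        BLratio C p 𝒬 (fun i => harmonicMean (A i) (A' i)) := by
  have hArith (i : Fin m) : ((2 : ℝ)⁻¹ • (A i + A' i)).PosDef :=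
    ((hA i).add (hA' i)).smul (by norm_num)
  have hHarm (i : Fin m) : (harmonicMean (A i) (A' i)).PosDef := (hA i).harmonicMean (hA' i)
  have hM := BLmatrix_posDef hker hp h𝒬 hA
  have hM' := BLmatrix_posDef hker hp h𝒬 hA'
  have hMH := BLmatrix_posDef hker hp h𝒬 hHarm
  have hMA := BLmatrix_posDef hker hp h𝒬 hArith
  have hdet := hMH.det_le_det (posSemidef_harmonicMean_BLmatrix_sub hp h𝒬 hA hA' hM hM' hMH)
  have hprod := hM.det_arithmeticMean_mul_det_harmonicMean hM'
  rw [← BLmatrix_arithmeticMean] at hprod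
  have hnum : (∏ i, ((2 : ℝ)⁻¹ • (A i + A' i)).det ^ p i) *
      ∏ i, (harmonicMean (A i) (A' i)).det ^ p i =
      (∏ i, (A i).det ^ p i) * ∏ i, (A' i).det ^ p i := by
    rw [← Finset.prod_mul_distrib, ← Finset.prod_mul_distrib]
    refine Finset.prod_congr rfl fun i _ => ?_
    rw [← Real.mul_rpow (hArith i).det_pos.le (hHarm i).det_pos.le,
      ← Real.mul_rpow (hA i).det_pos.le (hA' i).det_pos.le,
      (hA i).det_arithmeticMean_mul_det_harmonicMean (hA' i)]
  simp only [BLratio]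
  rw [div_mul_div_comm, div_mul_div_comm, hnum, ← hprod]
  refine div_le_div_of_nonneg_left ?_ (mul_pos hMA.det_pos hMH.det_pos)
    (mul_le_mul_of_nonneg_left hdet hMA.det_pos.le)
  exact mul_nonneg (Finset.prod_nonneg fun i _ => Real.rpow_nonneg (hA i).det_pos.le _)
    (Finset.prod_nonneg fun i _ => Real.rpow_nonneg (hA' i).det_pos.le _)

end BrascampLieb

/-- Gaussian extremizers are closed under the harmonic and the arithmetic mean. -/
theorem gaussian_extremizers_closed_under_means
    {n m : ℕ} (hm : 1 ≤ m) {ni : Fin m → ℕ}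
    (C : ∀ i, Matrix (Fin (ni i)) (Fin n) ℝ)
    (hCsurj : ∀ i, Function.Surjective (C i).mulVec)
    (hker : ∀ x : Fin n → ℝ, (∀ i, (C i).mulVec x = 0) → x = 0)
    (p : Fin m → ℝ) (hp : ∀ i, 0 < p i)
    (Q : ∀ i, Matrix (Fin (ni i)) (Fin (ni i)) ℝ) (hQ : ∀ i, (Q i).PosDef)
    (𝒬 : Matrix (Fin n) (Fin n) ℝ) (h𝒬 : 𝒬.PosSemidef)
    (hBL : BLconstQ C p Q 𝒬 < ⊤)
    (A A' : ∀ j, Matrix (Fin (ni j)) (Fin (ni j)) ℝ)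
    (hA : ∀ j, (A j).PosDef ∧ (Q j - A j).PosSemidef)
    (hA' : ∀ j, (A' j).PosDef ∧ (Q j - A' j).PosSemidef)
    (hAmax : BLconstQ C p Q 𝒬 = BLval C p 𝒬 A)
    (hA'max : BLconstQ C p Q 𝒬 = BLval C p 𝒬 A') :
    ((∀ j, ((2 : ℝ) • ((A j)⁻¹ + (A' j)⁻¹)⁻¹).PosDef ∧
        (Q j - (2 : ℝ) • ((A j)⁻¹ + (A' j)⁻¹)⁻¹).PosSemidef) ∧
      BLconstQ C p Q 𝒬 = BLval C p 𝒬 (fun j => (2 : ℝ) • ((A j)⁻¹ + (A' j)⁻¹)⁻¹)) ∧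
    ((∀ j, (((2 : ℝ)⁻¹) • (A j + A' j)).PosDef ∧
        (Q j - ((2 : ℝ)⁻¹) • (A j + A' j)).PosSemidef) ∧
      BLconstQ C p Q 𝒬 = BLval C p 𝒬 (fun j => ((2 : ℝ)⁻¹) • (A j + A' j))) := by
  have hratio {B : ∀ i, Matrix (Fin (ni i)) (Fin (ni i)) ℝ} (hB : ∀ i, (B i).PosDef) :=
    BLval_eq_ofReal hB (BLmatrix_posDef hker hp h𝒬 hB)
  have hpos {B : ∀ i, Matrix (Fin (ni i)) (Fin (ni i)) ℝ} (hB : ∀ i, (B i).PosDef) :=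
    BLratio_pos hB (BLmatrix_posDef hker hp h𝒬 hB)
  have hApos j := (hA j).1
  have hA'pos j := (hA' j).1
  have hle {B : ∀ i, Matrix (Fin (ni i)) (Fin (ni i)) ℝ}
      (hB : ∀ i, (B i).PosDef ∧ (Q i - B i).PosSemidef) :
      BLratio C p 𝒬 B ≤ BLratio C p 𝒬 A := by
    have h : BLval C p 𝒬 B ≤ BLconstQ C p Q 𝒬 :=
      le_iSup₂ (f := fun (B : ∀ i, Matrix (Fin (ni i)) (Fin (ni i)) ℝ)
        (_ : ∀ i, (B i).PosDef ∧ (Q i - B i).PosSemidef) => BLval C p 𝒬 B) B hB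
    rw [hAmax, hratio hApos, hratio fun i => (hB i).1,
      ENNReal.rpow_le_rpow_iff (by norm_num)] at h
    exact (ENNReal.ofReal_le_ofReal_iff (hpos hApos).le).mp h
  have heq : BLratio C p 𝒬 A' = BLratio C p 𝒬 A := by
    have h := hAmax.symm.trans hA'max
    rw [hratio hApos, hratio hA'pos] at h
    have h' := ENNReal.rpow_left_injective (by norm_num : (2 : ℝ)⁻¹ ≠ 0) h
    exact ((ENNReal.ofReal_eq_ofReal_iff (hpos hApos).le (hpos hA'pos).le).mp h').symm
  have hArith (j : Fin m) : ((2 : ℝ)⁻¹ • (A j + A' j)).PosDef ∧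
      (Q j - (2 : ℝ)⁻¹ • (A j + A' j)).PosSemidef := by
    refine ⟨((hApos j).add (hA'pos j)).smul (by norm_num), ?_⟩
    rw [show Q j - (2 : ℝ)⁻¹ • (A j + A' j) =
      (2 : ℝ)⁻¹ • ((Q j - A j) + (Q j - A' j)) by module]
    exact ((hA j).2.add (hA' j).2).smul (by norm_num)
  have hHarm (j : Fin m) : (harmonicMean (A j) (A' j)).PosDef ∧
      (Q j - harmonicMean (A j) (A' j)).PosSemidef := by
    refine ⟨(hApos j).harmonicMean (hA'pos j), ?_⟩
    rw [← sub_add_sub_cancel]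
    exact (hArith j).2.add
      ((hApos j).posSemidef_arithmeticMean_sub_harmonicMean (hA'pos j))
  have hmul := BLratio_mul_le hker hp h𝒬 hApos hA'pos
  rw [heq] at hmul
  have hK := hpos hApos
  have hleArith := hle hArith
  have hleHarm := hle hHarm
  refine ⟨⟨hHarm, ?_⟩, ⟨hArith, ?_⟩⟩
  · rw [hAmax, hratio hApos, hratio fun j => (hHarm j).1]
    congr 2
    refine le_antisymm (le_of_mul_le_mul_left (hmul.trans ?_) hK) hleHarm
    exact mul_le_mul_of_nonneg_right hleArith (hpos fun j => (hHarm j).1).le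
  · rw [hAmax, hratio hApos, hratio fun j => (hArith j).1]
    congr 2
    refine le_antisymm (le_of_mul_le_mul_right (hmul.trans ?_) hK) hleArith
    exact mul_le_mul_of_nonneg_left hleHarm (hpos fun j => (hArith j).1).le
end
end

section
/- Let (C,p,Q) be a Brascamp–Lieb datum, let D : ℝⁿ → ℝⁿ and D_j : ℝ^{n_j} → ℝ^{n_j} (j = 1,…,m) be invertible linear maps, and set C'_j = D_j^{-1} C_j D and Q'_j = D_jᵀ Q_j D_j. Then BL(C',p,Q') = (∏_{j=1}^m |det D_j|^{p_j} / |det D|) · BL(C,p,Q). -/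
open MeasureTheory Matrix
open scoped ENNReal

noncomputable section

/-- The regularized Brascamp–Lieb constant of a datum `(C, p, Q)`. -/
def BLconst {n m : ℕ} {ni : Fin m → ℕ} (C : ∀ i, Matrix (Fin (ni i)) (Fin n) ℝ)
    (p : Fin m → ℝ) (Q : ∀ i, Matrix (Fin (ni i)) (Fin (ni i)) ℝ) : ℝ≥0∞ :=
  ⨆ (B : ∀ i, Matrix (Fin (ni i)) (Fin (ni i)) ℝ)
    (_ : ∀ i, (B i).PosDef ∧ (Q i - B i).PosSemidef),
    ((∏ i, ENNReal.ofReal ((B i).det) ^ p i) /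
        ENNReal.ofReal ((∑ i, p i • ((C i)ᵀ * B i * C i)).det)) ^ ((2 : ℝ)⁻¹)

/-- Congruence by invertible matrices rescales the functional defining the regularized
Brascamp–Lieb constant by the determinants of the transformations. -/
theorem BLfunctional_equivalent_data {n m : ℕ} {ni : Fin m → ℕ}
    (C : ∀ j, Matrix (Fin (ni j)) (Fin n) ℝ) (p : Fin m → ℝ) (hp : ∀ j, 0 < p j)
    (D : Matrix (Fin n) (Fin n) ℝ) (hD : IsUnit D.det)
    (Dj : ∀ j, Matrix (Fin (ni j)) (Fin (ni j)) ℝ) (hDj : ∀ j, IsUnit (Dj j).det)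
    (B : ∀ j, Matrix (Fin (ni j)) (Fin (ni j)) ℝ) :
    ((∏ j, ENNReal.ofReal (((Dj j)ᵀ * B j * Dj j).det) ^ p j) /
        ENNReal.ofReal ((∑ j, p j • (((Dj j)⁻¹ * C j * D)ᵀ * ((Dj j)ᵀ * B j * Dj j) *
          ((Dj j)⁻¹ * C j * D))).det)) ^ ((2 : ℝ)⁻¹) =
      ENNReal.ofReal ((∏ j, |(Dj j).det| ^ p j) / |D.det|) *
        ((∏ j, ENNReal.ofReal ((B j).det) ^ p j) /
          ENNReal.ofReal ((∑ j, p j • ((C j)ᵀ * B j * C j)).det)) ^ ((2 : ℝ)⁻¹) := by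
  have hD0 : 0 < |D.det| := abs_pos.2 hD.ne_zero
  have hDj0 : ∀ j, 0 < |(Dj j).det| := fun j => abs_pos.2 (hDj j).ne_zero
  have hterm : ∀ j, ((Dj j)⁻¹ * C j * D)ᵀ * ((Dj j)ᵀ * B j * Dj j) * ((Dj j)⁻¹ * C j * D) =
      Dᵀ * ((C j)ᵀ * B j * C j) * D := by
    intro j
    calc _ = Dᵀ * (C j)ᵀ * (Dj j * (Dj j)⁻¹)ᵀ * B j * (Dj j * (Dj j)⁻¹) * C j * D := by
          simp only [transpose_mul, Matrix.mul_assoc]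
      _ = _ := by
          simp [Matrix.mul_nonsing_inv _ (hDj j), Matrix.mul_assoc]
  have hsum : ∑ j, p j • (((Dj j)⁻¹ * C j * D)ᵀ * ((Dj j)ᵀ * B j * Dj j) *
      ((Dj j)⁻¹ * C j * D)) = Dᵀ * (∑ j, p j • ((C j)ᵀ * B j * C j)) * D := by
    simp only [hterm, Matrix.mul_sum, Matrix.sum_mul, Matrix.mul_smul, Matrix.smul_mul]
  have hdet : ∀ {k : ℕ} (M N : Matrix (Fin k) (Fin k) ℝ),
      ENNReal.ofReal (Mᵀ * N * M).det = ENNReal.ofReal |M.det| ^ (2 : ℝ) *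
        ENNReal.ofReal N.det := by
    intro k M N
    rw [ENNReal.rpow_two, ← ENNReal.ofReal_pow (abs_nonneg _), sq_abs,
      ← ENNReal.ofReal_mul (sq_nonneg _), det_mul, det_mul, det_transpose]
    ring_nf
  have hprod : ∏ j, (ENNReal.ofReal |(Dj j).det| ^ (2 : ℝ)) ^ p j =
      ENNReal.ofReal (∏ j, |(Dj j).det| ^ p j) ^ (2 : ℝ) := by
    rw [ENNReal.ofReal_prod_of_nonneg fun j _ => Real.rpow_nonneg (abs_nonneg _) _,
      ← ENNReal.prod_rpow_of_nonneg zero_le_two]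
    refine Finset.prod_congr rfl fun j _ => ?_
    rw [← ENNReal.ofReal_rpow_of_pos (hDj0 j), ← ENNReal.rpow_mul, ← ENNReal.rpow_mul, mul_comm]
  have hd0 : ENNReal.ofReal |D.det| ^ (2 : ℝ) ≠ 0 := by
    rw [ENNReal.rpow_two]
    exact pow_ne_zero _ (ENNReal.ofReal_pos.2 hD0).ne'
  have hdtop : ENNReal.ofReal |D.det| ^ (2 : ℝ) ≠ ⊤ :=
    ENNReal.rpow_ne_top_of_nonneg zero_le_two ENNReal.ofReal_ne_top
  rw [hsum, hdet]
  simp only [hdet, ENNReal.mul_rpow_of_nonneg _ _ (hp _).le, Finset.prod_mul_distrib]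
  rw [hprod, ENNReal.mul_div_mul_comm (Or.inl hd0) (Or.inl hdtop),
    ← ENNReal.div_rpow_of_nonneg _ _ zero_le_two, ← ENNReal.ofReal_div_of_pos hD0,
    ENNReal.mul_rpow_of_nonneg _ _ (by positivity), ← ENNReal.rpow_mul,
    mul_inv_cancel₀ two_ne_zero, ENNReal.rpow_one]

/-- The regularized Brascamp–Lieb constants of equivalent data are related by the
determinants of the intertwining transformations. -/
theorem BLconst_equivalent_data
    {n m : ℕ} (hm : 1 ≤ m) {ni : Fin m → ℕ}
    (C : ∀ j, Matrix (Fin (ni j)) (Fin n) ℝ)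
    (hCsurj : ∀ j, Function.Surjective (C j).mulVec)
    (hker : ∀ x : Fin n → ℝ, (∀ j, (C j).mulVec x = 0) → x = 0)
    (p : Fin m → ℝ) (hp : ∀ j, 0 < p j)
    (Q : ∀ j, Matrix (Fin (ni j)) (Fin (ni j)) ℝ) (hQ : ∀ j, (Q j).PosDef)
    (D : Matrix (Fin n) (Fin n) ℝ) (hD : IsUnit D.det)
    (Dj : ∀ j, Matrix (Fin (ni j)) (Fin (ni j)) ℝ) (hDj : ∀ j, IsUnit (Dj j).det) :
    BLconst (fun j => (Dj j)⁻¹ * C j * D) p (fun j => (Dj j)ᵀ * Q j * Dj j) =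
      ENNReal.ofReal ((∏ j, |(Dj j).det| ^ p j) / |D.det|) * BLconst C p Q := by
  have hunit : ∀ j, IsUnit (Dj j) := fun j => (isUnit_iff_isUnit_det _).2 (hDj j)
  have hsurj : Function.Surjective (fun (B : ∀ j, Matrix (Fin (ni j)) (Fin (ni j)) ℝ) j =>
      (Dj j)ᵀ * B j * Dj j) := by
    intro B
    refine ⟨fun j => ((Dj j)⁻¹)ᵀ * B j * (Dj j)⁻¹, funext fun j => ?_⟩
    calc _ = ((Dj j)⁻¹ * Dj j)ᵀ * B j * ((Dj j)⁻¹ * Dj j) := by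
          simp only [transpose_mul, Matrix.mul_assoc]
      _ = B j := by simp [Matrix.nonsing_inv_mul _ (hDj j)]
  simp only [BLconst, ENNReal.mul_iSup]
  refine (hsurj.iSup_congr _ fun B => ?_).symm
  refine iSup_congr_Prop (forall_congr' fun j => and_congr ?_ ?_) fun _ =>
    BLfunctional_equivalent_data C p hp D hD Dj hDj B
  · simpa [star_eq_conjTranspose] using (hunit j).posDef_star_left_conjugate_iff (x := B j)
  · rw [← Matrix.sub_mul, ← Matrix.mul_sub]
    simpa [star_eq_conjTranspose] using
      (hunit j).posSemidef_star_left_conjugate_iff (x := Q j - B j)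
end
end
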